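/- arXiv:1503.00325 — 4 statements merged into one kernel-verified Lean document; each statement's English description precedes it below -/
import Mathlib

section
/- (Hayman) Let g(z) = a_0 + a_1 z + ⋯ be analytic, nowhere vanishing, and p-valent in the unit disk D_1 = {z ∈ ℂ : |z| < 1}. Then for every z ∈ D_1, ((1−|z|)/(1+|z|))^{2p} ≤ |g(z)/a_0| ≤ ((1+|z|)/(1−|z|))^{2p}. -/
-- The order of vanishing of `g` at `z` (zero if `g` is not analytic at `z`).
open scoped Classical in
noncomputable def ordAt (g : ℂ → ℂ) (z : ℂ) : ℕ∞ :=
  if h : AnalyticAt ℂ g z then analyticOrderAt g z else 0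

/-- The number of zeroes of `g` in `Ω`, counted with multiplicity. -/
noncomputable def solCount (g : ℂ → ℂ) (Ω : Set ℂ) : ℕ∞ :=
  ∑' z : Ω, ordAt g z

/-- `f` is `(s,p)`-valent in `Ω`: for every polynomial `P` of degree at most `s`,
the equation `f = P` has at most `p` solutions in `Ω`, counted with multiplicity. -/
def IsSPValentOn (f : ℂ → ℂ) (Ω : Set ℂ) (s p : ℕ) : Prop :=
  ∀ P : Polynomial ℂ, P.degree ≤ (s : ℕ) →
    solCount (fun z => f z - P.eval z) Ω ≤ (p : ℕ∞)

/-- `g` is `p`-valent in `Ω`: for every constant `c`, the equation `g = c` has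
at most `p` solutions in `Ω`, counted with multiplicity. -/
def IsPValentOn (g : ℂ → ℂ) (Ω : Set ℂ) (p : ℕ) : Prop :=
  ∀ c : ℂ, solCount (fun z => g z - c) Ω ≤ (p : ℕ∞)

/-!
Let `f = exp k` be a `p`-th root of `g`. Its image contains no circle `|w| = R`: the `p` points of
such a circle with a common `p`-th power would use up all `p` admissible preimages, so `f` would
have a continuous inverse `σ` over the circle, and `k ∘ σ` would be a continuous logarithm there.

On a disk of centre `c` and radius `r`, choose values `e₁, …, eₙ` omitted by `f` on circles whose
radii correspond to the zeros of the `n`-th Chebyshev polynomial. The maximum principle for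
`∏ᵢ (f z - f c) / (z - c) * (f c - eᵢ) / (f z - eᵢ)` gives `(r |f' c|) ^ n ≤ C (4 |f c|) ^ n` with
`C` independent of `n`, hence the Koebe-type bound `r |f' c| ≤ 4 |f c|`. Transported by the
automorphisms of the unit disk it reads `(1 - |a|²) |k' a| ≤ 4`, and integrating this along a
radius bounds `|k z - k 0|`.
-/

open Filter Metric Set Topology

section Valence

variable {g : ℂ → ℂ} {Ω : Set ℂ} {p : ℕ}

lemma ordAt_eq_analyticOrderAt (g : ℂ → ℂ) (z : ℂ) : ordAt g z = analyticOrderAt g z := by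
  by_cases h : AnalyticAt ℂ g z <;> simp [ordAt, h]

lemma enat_sum_le_tsum_subtype {α : Type*} (f : α → ℕ∞) {s : Set α} {t : Finset α}
    (ht : ↑t ⊆ s) : ∑ a ∈ t, f a ≤ ∑' a : s, f a := by
  classical
  have summable_f : Summable fun a : s ↦ f a :=
    ⟨_, hasSum_of_isLUB _ (isLUB_iSup (f := fun u : Finset s ↦ ∑ a ∈ u, f a))⟩
  rw [← Finset.sum_subtype_of_mem f (fun _ ha ↦ ht ha)]
  exact summable_f.sum_le_tsum _ fun _ _ ↦ zero_le

lemma IsPValentOn.encard_fiber_le (hval : IsPValentOn g Ω p) (hg : AnalyticOnNhd ℂ g Ω) (c : ℂ) :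
    {z ∈ Ω | g z = c}.encard ≤ p := by
  by_contra! lt_encard
  obtain ⟨t, ht, t_encard⟩ := exists_subset_encard_eq (Order.add_one_le_of_lt lt_encard)
  lift t to Finset ℂ using finite_of_encard_eq_coe (k := p + 1) (by exact_mod_cast t_encard)
  have one_le_order : ∀ z ∈ t, 1 ≤ ordAt (fun z ↦ g z - c) z := fun z hz ↦ by
    have analyticAt : AnalyticAt ℂ (fun z ↦ g z - c) z := (hg z (ht hz).1).sub analyticAt_const
    rw [ordAt_eq_analyticOrderAt, Order.one_le_iff_ne_zero, analyticAt.analyticOrderAt_ne_zero,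
      (ht hz).2, sub_self]
  have : (p + 1 : ℕ∞) ≤ p := calc
    (p + 1 : ℕ∞) = ∑ z ∈ t, 1 := by simp [← t_encard]
    _ ≤ ∑ z ∈ t, ordAt (fun z ↦ g z - c) z := Finset.sum_le_sum one_le_order
    _ ≤ solCount (fun z ↦ g z - c) Ω := enat_sum_le_tsum_subtype _ fun z hz ↦ (ht hz).1
    _ ≤ p := hval c
  exact absurd this (by exact_mod_cast p.lt_succ_self.not_ge)

lemma IsPValentOn.ne_zero (hval : IsPValentOn g Ω p) (hg : AnalyticOnNhd ℂ g Ω)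
    (hΩ : Ω.Nonempty) : p ≠ 0 := by
  rintro rfl
  obtain ⟨z, hz⟩ := hΩ
  have fiber_empty : {w ∈ Ω | g w = g z} = ∅ := by simpa using hval.encard_fiber_le hg (g z)
  exact fiber_empty.subset ⟨hz, rfl⟩

end Valence

section Logarithm

open Complex

variable {g : ℂ → ℂ} {U : Set ℂ}

lemma differentiableAt_of_comp {f k : ℂ → ℂ} {f' z : ℂ} (hf : HasStrictDerivAt f f' (k z))
    (hf' : f' ≠ 0) (hk : ContinuousAt k z) (hfk : DifferentiableAt ℂ (f ∘ k) z) :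
    DifferentiableAt ℂ k z := by
  have k_eq : hf.localInverse f f' (k z) hf' ∘ (f ∘ k) =ᶠ[𝓝 z] k :=
    hk.eventually (hf.eventually_left_inverse hf')
  have h_inv : DifferentiableAt ℂ (hf.localInverse f f' (k z) hf') ((f ∘ k) z) :=
    (hf.to_localInverse hf').hasDerivAt.differentiableAt
  exact k_eq.differentiableAt_iff.1 (h_inv.comp z hfk)

lemma exists_differentiableOn_exp_eq (hU : IsSimplyConnected U) (hU' : IsOpen U)
    (hg : DifferentiableOn ℂ g U) (hg₀ : ∀ z ∈ U, g z ≠ 0) :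
    ∃ k : ℂ → ℂ, DifferentiableOn ℂ k U ∧ ∀ z ∈ U, exp (k z) = g z := by
  obtain ⟨k, hk, hkg⟩ := exists_continuousOn_eqOn_exp_comp hU hU' hg.continuousOn
    (by rintro ⟨z, hz, h⟩; exact hg₀ z hz h)
  refine ⟨k, fun z hz ↦ DifferentiableAt.differentiableWithinAt ?_, hkg⟩
  have hUz := hU'.mem_nhds hz
  exact differentiableAt_of_comp (hasStrictDerivAt_exp _) (exp_ne_zero _)
    (hk.continuousAt hUz) ((hkg.eventuallyEq_of_mem hUz).differentiableAt_iff.2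
      (hg.differentiableAt hUz))

lemma exists_differentiableOn_exp_pow_eq {p : ℕ} (hp : p ≠ 0) (hU : IsSimplyConnected U)
    (hU' : IsOpen U) (hg : DifferentiableOn ℂ g U) (hg₀ : ∀ z ∈ U, g z ≠ 0) :
    ∃ k : ℂ → ℂ, DifferentiableOn ℂ k U ∧ ∀ z ∈ U, exp (k z) ^ p = g z := by
  obtain ⟨l, hl, hlg⟩ := exists_differentiableOn_exp_eq hU hU' hg hg₀
  refine ⟨fun z ↦ l z / p, hl.div_const _, fun z hz ↦ ?_⟩
  rw [← exp_nat_mul, mul_div_cancel₀ _ (Nat.cast_ne_zero.2 hp), hlg z hz]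

lemma not_exists_continuousOn_log_sphere {R : ℝ} (hR : 0 < R) :
    ¬∃ l : ℂ → ℂ, ContinuousOn l (sphere 0 R) ∧ ∀ w ∈ sphere 0 R, exp (l w) = w := by
  rintro ⟨l, hl, exp_l⟩
  have mem_sphere (θ : ℝ) : circleMap 0 R θ ∈ sphere 0 R := circleMap_mem_sphere 0 hR.le θ
  have continuous_diff : Continuous fun θ : ℝ ↦ l (circleMap 0 R θ) - θ * I :=
    (hl.comp_continuous (continuous_circleMap 0 R) mem_sphere).sub (by fun_prop)
  have exp_diff (θ : ℝ) : exp (l (circleMap 0 R θ) - θ * I) = R := by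
    rw [exp_sub, exp_l _ (mem_sphere θ), circleMap_zero, mul_div_cancel_right₀ _ (exp_ne_zero _)]
  have := isCoveringMap_exp.const_of_comp continuous_diff
    (fun θ θ' ↦ Subtype.ext ((exp_diff θ).trans (exp_diff θ').symm)) 0 (2 * Real.pi)
  have circleMap_two_pi : circleMap 0 R (2 * Real.pi) = circleMap 0 R 0 := by
    simpa using periodic_circleMap 0 R 0
  rw [circleMap_two_pi, sub_right_inj] at this
  simp [Real.pi_ne_zero, I_ne_zero] at this

end Logarithm

section OmittedPoints

open Complex

/-- A set contains no circle centred at the origin, the degenerate circle `{0}` included. This is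
the property of the image of a `p`-th root of a nonvanishing `p`-valent function from which the
distortion theorem is derived. -/
def ContainsNoCircle (s : Set ℂ) : Prop :=
  ∀ R : ℝ, 0 ≤ R → ¬sphere (0 : ℂ) R ⊆ s

lemma ContainsNoCircle.mono {s t : Set ℂ} (ht : ContainsNoCircle t) (hst : s ⊆ t) :
    ContainsNoCircle s :=
  fun R hR hs ↦ ht R hR (hs.trans hst)

lemma ContainsNoCircle.zero_notMem {s : Set ℂ} (hs : ContainsNoCircle s) : (0 : ℂ) ∉ s := by
  simpa using hs 0 le_rfl

lemma exists_continuousOn_rightInverse {X Y : Type*} [TopologicalSpace X] [TopologicalSpace Y]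
    [Nonempty X] {f : X → Y} {U : Set X} {C : Set Y} (hU : IsOpen U)
    (hf : ∀ s ⊆ U, IsOpen s → IsOpen (f '' s)) (hinj : InjOn f (U ∩ f ⁻¹' C))
    (hC : C ⊆ f '' U) :
    ∃ σ : Y → X, ContinuousOn σ C ∧ MapsTo σ C U ∧ ∀ y ∈ C, f (σ y) = y := by
  choose! σ hσU hσ using fun y (hy : y ∈ C) ↦ hC hy
  refine ⟨σ, fun y hy ↦ ?_, hσU, hσ⟩
  rw [ContinuousWithinAt, (nhds_basis_opens _).tendsto_right_iff]
  rintro V ⟨hyV, hV⟩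
  have fV_mem : f '' (U ∩ V) ∈ 𝓝 y :=
    (hf _ inter_subset_left (hU.inter hV)).mem_nhds ⟨σ y, ⟨hσU y hy, hyV⟩, hσ y hy⟩
  filter_upwards [self_mem_nhdsWithin, mem_nhdsWithin_of_mem_nhds fV_mem]
  rintro _ hx ⟨x, ⟨hxU, hxV⟩, rfl⟩
  have : σ (f x) = x := hinj ⟨hσU _ hx, by simpa [hσ _ hx] using hx⟩ ⟨hxU, hx⟩ (hσ _ hx)
  rwa [this]

lemma encard_setOf_pow_eq_pow {p : ℕ} (hp : p ≠ 0) {e : ℂ} (he : e ≠ 0) :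
    {w : ℂ | w ^ p = e ^ p}.encard = p := by
  have setOf_eq : {w : ℂ | w ^ p = e ^ p} = ↑(Polynomial.nthRoots p (e ^ p)).toFinset := by
    ext w
    simp [Polynomial.mem_nthRoots (Nat.pos_of_ne_zero hp)]
  have prim := Complex.isPrimitiveRoot_exp p hp
  rw [setOf_eq, encard_coe_eq_coe_finsetCard, Multiset.toFinset_card_of_nodup
    (prim.nthRoots_nodup (pow_ne_zero p he)), prim.card_nthRoots, if_pos ⟨e, rfl⟩]

-- The `p` points of the circle with a given `p`-th power already use up all `p` admissible
-- preimages, so each of them has only one.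
lemma injOn_of_sphere_subset_image {X : Type*} {f : X → ℂ} {U : Set X} {p : ℕ} (hp : p ≠ 0)
    (hfib : ∀ c, {x ∈ U | f x ^ p = c}.encard ≤ p) {R : ℝ} (hR : 0 < R)
    (hsub : sphere 0 R ⊆ f '' U) : InjOn f (U ∩ f ⁻¹' sphere 0 R) := by
  rintro x ⟨hxU, hxR⟩ y ⟨hyU, -⟩ hxy
  by_contra hne
  have hx0 : f x ≠ 0 := ne_of_mem_sphere hxR hR.ne'
  set S := {z ∈ U | f z ^ p = f x ^ p}
  have hyS : y ∈ S := ⟨hyU, by rw [hxy]⟩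
  have roots_subset : {w : ℂ | w ^ p = f x ^ p} ⊆ f '' (S \ {y}) := by
    intro w hw
    obtain ⟨z, hzU, rfl⟩ : w ∈ f '' U := hsub <| by
      rw [mem_preimage, mem_sphere_zero_iff_norm] at hxR
      rw [mem_sphere_zero_iff_norm, ← hxR, ← pow_left_inj₀ (norm_nonneg _) (norm_nonneg _) hp,
        ← norm_pow, hw, norm_pow]
    obtain rfl | hzy := eq_or_ne z y
    · exact ⟨x, ⟨⟨hxU, rfl⟩, hne⟩, hxy⟩
    · exact ⟨z, ⟨⟨hzU, hw⟩, hzy⟩, rfl⟩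
  have p_le : (p : ℕ∞) ≤ (S \ {y}).encard :=
    (encard_setOf_pow_eq_pow hp hx0).symm.le.trans
      ((encard_le_encard roots_subset).trans (encard_image_le f _))
  have := calc (p : ℕ∞) + 1 ≤ (S \ {y}).encard + 1 := by gcongr
    _ = S.encard := encard_sdiff_singleton_add_one hyS
    _ ≤ p := hfib _
  exact absurd this (by exact_mod_cast p.lt_succ_self.not_ge)

lemma not_sphere_subset_singleton {R : ℝ} (hR : 0 < R) (w : ℂ) : ¬sphere (0 : ℂ) R ⊆ {w} := by
  intro h
  have hpos : (R : ℂ) = w := h (by simp [hR.le])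
  have hneg : (-R : ℂ) = w := h (by simp [hR.le])
  rw [← hneg, self_eq_neg, ofReal_eq_zero] at hpos
  exact hR.ne' hpos

lemma containsNoCircle_image_exp {k : ℂ → ℂ} {U : Set ℂ} {p : ℕ} (hU : IsOpen U)
    (hU' : IsPreconnected U) (hk : DifferentiableOn ℂ k U) (hp : p ≠ 0)
    (hfib : ∀ c, {z ∈ U | exp (k z) ^ p = c}.encard ≤ p) :
    ContainsNoCircle ((fun z ↦ exp (k z)) '' U) := by
  intro R hR hsub
  obtain rfl | hR := hR.eq_or_lt
  · simp [exp_ne_zero] at hsub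
  have open_map : ∀ s ⊆ U, IsOpen s → IsOpen ((fun z ↦ exp (k z)) '' s) := by
    refine ((hk.cexp.analyticOnNhd hU).is_constant_or_isOpen hU').resolve_left ?_
    rintro ⟨w, hw⟩
    exact not_sphere_subset_singleton hR w (hsub.trans (image_subset_iff.2 hw))
  obtain ⟨σ, hσ, hσU, exp_k_σ⟩ := exists_continuousOn_rightInverse hU open_map
    (injOn_of_sphere_subset_image hp hfib hR hsub) hsub
  exact not_exists_continuousOn_log_sphere hR ⟨k ∘ σ, hk.continuousOn.comp hσ hσU, exp_k_σ⟩

end OmittedPoints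

section ChebyshevNodes

open Polynomial Real

/-- The zeros of the Chebyshev polynomial `T n`, all lying in `(-1, 1)`. As the interval `[-1, 1]`
has capacity `1 / 2`, products of distances to them are about `2⁻¹ ^ n` on that interval. -/
noncomputable def chebyshevNodes (n : ℕ) : Finset ℝ :=
  (Finset.range n).image fun k : ℕ ↦ cos ((2 * k + 1) * π / (2 * n))

lemma card_chebyshevNodes (n : ℕ) : (chebyshevNodes n).card = n := by
  rw [chebyshevNodes, Finset.card_image_of_injOn, Finset.card_range]
  exact fun _ hi _ hj ↦ Multiset.inj_on_of_nodup_map (Chebyshev.roots_T_real_nodup n) _ hi _ hj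

lemma coe_chebyshevNodes_subset_Ioo (n : ℕ) : ↑(chebyshevNodes n) ⊆ Ioo (-1 : ℝ) 1 := by
  intro t ht
  obtain ⟨k, hk, rfl⟩ := Finset.mem_image.1 ht
  have hkn : (k : ℝ) + 1 ≤ n := by exact_mod_cast Finset.mem_range.1 hk
  have hn : (0 : ℝ) < 2 * n := by linarith [k.cast_nonneg (α := ℝ)]
  have angle_pos : 0 < (2 * k + 1) * π / (2 * n) := by positivity
  have angle_lt_pi : (2 * k + 1) * π / (2 * n) < π := by
    rw [div_lt_iff₀ hn]
    nlinarith [pi_pos]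
  constructor
  · simpa using cos_lt_cos_of_nonneg_of_le_pi angle_pos.le le_rfl angle_lt_pi
  · simpa using cos_lt_cos_of_nonneg_of_le_pi le_rfl angle_lt_pi.le angle_pos

lemma eval_T_eq_prod_chebyshevNodes (n : ℕ) (x : ℝ) :
    (Chebyshev.T ℝ n).eval x = 2 ^ (n - 1) * ∏ t ∈ chebyshevNodes n, (x - t) := by
  have card_roots : (Chebyshev.T ℝ n).roots.card = (Chebyshev.T ℝ n).natDegree := by
    rw [Chebyshev.natDegree_T, Int.natAbs_natCast, Chebyshev.roots_T_real]
    exact card_chebyshevNodes n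
  rw [← C_leadingCoeff_mul_prod_multiset_X_sub_C card_roots, Chebyshev.leadingCoeff_T,
    Int.natAbs_natCast, Chebyshev.roots_T_real, eval_mul, eval_C, eval_multiset_prod,
    Multiset.map_map]
  simp [chebyshevNodes, Finset.prod]

lemma exists_lt_abs_sub_odd_mul_pi_div_two_le {n : ℕ} (hn : n ≠ 0) {θ : ℝ}
    (hθ : θ ∈ Icc 0 (n * π)) : ∃ k < n, |θ - (2 * k + 1) * π / 2| ≤ π / 2 := by
  obtain rfl | hlt := hθ.2.eq_or_lt
  · refine ⟨n - 1, by lia, le_of_eq ?_⟩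
    rw [Nat.cast_pred (Nat.pos_of_ne_zero hn), ← abs_of_pos pi_div_two_pos]
    congr 1
    ring
  · have floor_le : (⌊θ / π⌋₊ : ℝ) * π ≤ θ :=
      (le_div_iff₀ pi_pos).1 (Nat.floor_le (div_nonneg hθ.1 pi_pos.le))
    have lt_floor : θ < (⌊θ / π⌋₊ + 1) * π := (div_lt_iff₀ pi_pos).1 (Nat.lt_floor_add_one _)
    refine ⟨⌊θ / π⌋₊, ?_, abs_le.2 ⟨by linarith, by linarith⟩⟩
    exact_mod_cast lt_of_mul_lt_mul_right (floor_le.trans_lt hlt) pi_pos.le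

lemma two_div_pi_mul_abs_le_abs_cos {θ : ℝ} {k : ℕ} (h : |θ - (2 * k + 1) * π / 2| ≤ π / 2) :
    2 / π * |θ - (2 * k + 1) * π / 2| ≤ |cos θ| := by
  have abs_cos : |cos θ| = |sin (θ - (2 * k + 1) * π / 2)| := by
    have : θ = θ - (2 * k + 1) * π / 2 + k * π + π / 2 := by ring
    rw [this, cos_add_pi_div_two, abs_neg, sin_add_nat_mul_pi, abs_mul, abs_neg_one_pow, one_mul]
    ring_nf
  rw [abs_cos]
  exact mul_abs_le_abs_sin h

lemma exists_mem_chebyshevNodes_abs_sub_le {n : ℕ} (hn : n ≠ 0) {x : ℝ} (hx : x ∈ Icc (-1) 1) :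
    ∃ y ∈ chebyshevNodes n, 2 / π * |x - y| ≤ |(Chebyshev.T ℝ n).eval x| := by
  have one_le_n : (1 : ℝ) ≤ n := by exact_mod_cast Nat.one_le_iff_ne_zero.2 hn
  set ψ := arccos x
  have cos_ψ : cos ψ = x := cos_arccos hx.1 hx.2
  obtain ⟨k, hk, near⟩ := exists_lt_abs_sub_odd_mul_pi_div_two_le hn (θ := n * ψ)
    ⟨mul_nonneg n.cast_nonneg (arccos_nonneg x), by gcongr; exact arccos_le_pi x⟩
  refine ⟨_, Finset.mem_image_of_mem _ (Finset.mem_range.2 hk), ?_⟩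
  calc 2 / π * |x - cos ((2 * k + 1) * π / (2 * n))|
      ≤ 2 / π * (n * |ψ - (2 * k + 1) * π / (2 * n)|) := by
        rw [← cos_ψ]
        gcongr
        exact (abs_cos_sub_cos_le _ _).trans (le_mul_of_one_le_left (abs_nonneg _) one_le_n)
    _ = 2 / π * |n * ψ - (2 * k + 1) * π / 2| := by
        have : n * ψ - (2 * k + 1) * π / 2 = n * (ψ - (2 * k + 1) * π / (2 * n)) := by field_simp
        rw [this, abs_mul, Nat.abs_cast]
    _ ≤ |cos (n * ψ)| := two_div_pi_mul_abs_le_abs_cos near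
    _ = |(Chebyshev.T ℝ n).eval x| := by rw [← cos_ψ, Chebyshev.T_real_cos, Int.cast_natCast]

-- Only the factor of the node nearest to `x` can be small compared with `|T n x|`.
lemma mul_two_inv_pow_le_prod_max_of_notMem {n : ℕ} (hn : n ≠ 0) {δ x : ℝ}
    (hx : x ∈ Icc (-1) 1) (hxn : x ∉ chebyshevNodes n) :
    2 / π * δ * 2⁻¹ ^ n ≤ ∏ t ∈ chebyshevNodes n, max |x - t| δ := by
  obtain ⟨y, hy, hxy⟩ := exists_mem_chebyshevNodes_abs_sub_le hn hx
  have xy_pos : 0 < |x - y| := abs_sub_pos.2 (ne_of_mem_of_not_mem hy hxn).symm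
  have two_pow : (2 : ℝ) ^ (n - 1) ≤ 2 ^ n := by gcongr <;> simp
  have erase_le : 2 / π * 2⁻¹ ^ n ≤ ∏ t ∈ (chebyshevNodes n).erase y, |x - t| := by
    rw [eval_T_eq_prod_chebyshevNodes, abs_mul, abs_of_pos (by positivity : (0 : ℝ) < 2 ^ (n - 1)),
      Finset.abs_prod, ← Finset.mul_prod_erase _ (fun t ↦ |x - t|) hy] at hxy
    rw [inv_pow, ← div_eq_mul_inv, div_le_iff₀ (by positivity), ← mul_le_mul_iff_left₀ xy_pos]
    have : 0 ≤ ∏ t ∈ (chebyshevNodes n).erase y, |x - t| := by positivity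
    nlinarith [mul_nonneg xy_pos.le this]
  calc 2 / π * δ * 2⁻¹ ^ n = δ * (2 / π * 2⁻¹ ^ n) := by ring
    _ ≤ max |x - y| δ * ∏ t ∈ (chebyshevNodes n).erase y, max |x - t| δ := by
        gcongr with t
        · exact le_max_right _ _
        · exact erase_le.trans (Finset.prod_le_prod (fun _ _ ↦ abs_nonneg _)
            fun _ _ ↦ le_max_left _ _)
    _ = ∏ t ∈ chebyshevNodes n, max |x - t| δ := Finset.mul_prod_erase _ (fun t ↦ max |x - t| δ) hy

lemma mul_two_inv_pow_le_prod_max {n : ℕ} (hn : n ≠ 0) {δ x : ℝ} (hx : x ∈ Icc (-1) 1) :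
    2 / π * δ * 2⁻¹ ^ n ≤ ∏ t ∈ chebyshevNodes n, max |x - t| δ := by
  have isClosed_le :
      IsClosed {x : ℝ | 2 / π * δ * 2⁻¹ ^ n ≤ ∏ t ∈ chebyshevNodes n, max |x - t| δ} :=
    isClosed_le continuous_const (by fun_prop)
  have dense_compl : Dense (↑(chebyshevNodes n) : Set ℝ)ᶜ :=
    (chebyshevNodes n).finite_toSet.countable.dense_compl ℝ
  have Icc_subset : Icc (-1 : ℝ) 1 ⊆ closure (Ioo (-1) 1 ∩ (↑(chebyshevNodes n))ᶜ) := by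
    rw [← closure_Ioo (by norm_num)]
    exact closure_minimal (dense_compl.open_subset_closure_inter isOpen_Ioo) isClosed_closure
  refine closure_minimal ?_ isClosed_le (Icc_subset hx)
  exact fun y hy ↦ mul_two_inv_pow_le_prod_max_of_notMem hn (Ioo_subset_Icc_self hy.1) hy.2

end ChebyshevNodes

section Separation

open Complex

variable {K : Set ℂ}

lemma exists_norm_eq_and_dist_eq (z : ℂ) {R : ℝ} (hR : 0 ≤ R) :
    ∃ e : ℂ, ‖e‖ = R ∧ dist e z = |R - ‖z‖| := by
  have norm_direction := norm_exp_ofReal_mul_I (arg z)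
  refine ⟨R * exp (arg z * I), ?_, ?_⟩
  · rw [norm_mul, norm_direction, mul_one, Complex.norm_of_nonneg hR]
  · nth_rewrite 2 [← norm_mul_exp_arg_mul_I z]
    rw [dist_eq_norm, ← sub_mul, norm_mul, norm_direction, mul_one, ← ofReal_sub, norm_real,
      Real.norm_eq_abs]

lemma ContainsNoCircle.exists_le_dist_of_mem_Icc (hK : ContainsNoCircle K) (hKc : IsClosed K)
    (M : ℝ) : ∃ δ > 0, ∀ R ∈ Icc 0 M, ∃ e : ℂ, ‖e‖ = R ∧ ∀ v ∈ K, δ ≤ dist v e := by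
  refine isCompact_Icc.induction_on (p := fun s ↦ ∃ δ > 0, ∀ R ∈ s, ∃ e : ℂ, ‖e‖ = R ∧
    ∀ v ∈ K, δ ≤ dist v e) ⟨1, one_pos, by simp⟩ ?mono ?union ?nhds
  case mono =>
    rintro s t hst ⟨δ, hδ, h⟩
    exact ⟨δ, hδ, fun R hR ↦ h R (hst hR)⟩
  case union =>
    rintro s t ⟨δ, hδ, hs⟩ ⟨δ', hδ', ht⟩
    refine ⟨min δ δ', lt_min hδ hδ', ?_⟩
    rintro R (hR | hR)
    · obtain ⟨e, he, h⟩ := hs R hR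
      exact ⟨e, he, fun v hv ↦ (min_le_left _ _).trans (h v hv)⟩
    · obtain ⟨e, he, h⟩ := ht R hR
      exact ⟨e, he, fun v hv ↦ (min_le_right _ _).trans (h v hv)⟩
  case nhds =>
    intro R₀ hR₀
    obtain ⟨e₀, he₀, e₀_notMem⟩ := not_subset.1 (hK R₀ hR₀.1)
    obtain ⟨ε, hε, ball_subset⟩ := isOpen_iff.1 hKc.isOpen_compl e₀ e₀_notMem
    refine ⟨Icc 0 M ∩ ball R₀ (ε / 2), inter_mem self_mem_nhdsWithin
      (mem_nhdsWithin_of_mem_nhds (ball_mem_nhds _ (half_pos hε))), ε / 2, half_pos hε, ?_⟩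
    rintro R ⟨⟨hR, -⟩, hRR₀⟩
    obtain ⟨e, he, hee₀⟩ := exists_norm_eq_and_dist_eq e₀ hR
    refine ⟨e, he, fun v hv ↦ ?_⟩
    rw [mem_ball, Real.dist_eq, ← mem_sphere_zero_iff_norm.1 he₀, ← hee₀] at hRR₀
    have : ε ≤ dist v e₀ := not_lt.1 fun h ↦ ball_subset h hv
    linarith [dist_triangle v e e₀]

lemma ContainsNoCircle.exists_mul_le_dist (hK : ContainsNoCircle K) (hKc : IsCompact K) {A : ℝ}
    (hA : 0 < A) :
    ∃ δ > 0, ∀ R ≥ 0, ∃ e : ℂ, ‖e‖ = R ∧ ∀ v ∈ K, δ * (A + R) ≤ dist v e := by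
  obtain ⟨M, hM, norm_le⟩ := hKc.isBounded.exists_pos_norm_le
  obtain ⟨δ, hδ, h⟩ := hK.exists_le_dist_of_mem_Icc hKc.isClosed (A + 2 * M)
  refine ⟨min (δ / (2 * (A + M))) (1 / 2), by positivity, fun R hR ↦ ?_⟩
  by_cases hRM : R ≤ A + 2 * M
  · obtain ⟨e, he, hev⟩ := h R ⟨hR, hRM⟩
    refine ⟨e, he, fun v hv ↦ ?_⟩
    calc min (δ / (2 * (A + M))) (1 / 2) * (A + R)
        ≤ δ / (2 * (A + M)) * (2 * (A + M)) := by
          gcongr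
          · exact min_le_left _ _
          · linarith
      _ = δ := by field_simp
      _ ≤ dist v e := hev v hv
  · refine ⟨R, by simpa using hR, fun v hv ↦ ?_⟩
    calc min (δ / (2 * (A + M))) (1 / 2) * (A + R) ≤ 1 / 2 * (A + R) := by
          gcongr
          exact min_le_right _ _
      _ ≤ R - M := by linarith
      _ ≤ ‖(R : ℂ)‖ - ‖v‖ := by
          rw [Complex.norm_of_nonneg hR]
          gcongr
          exact norm_le v hv
      _ ≤ dist v R := by
          rw [dist_comm, dist_eq_norm]
          exact norm_sub_norm_le _ _

/-- The coordinate `(|a| - |v|) / (|a| + |v|)` of the circle through `v` centred at the origin. It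
maps the radii `[0, ∞)` to `(-1, 1]` and sends the circle through `a` to `0`. -/
noncomputable def radialCoord (a v : ℂ) : ℝ := (‖a‖ - ‖v‖) / (‖a‖ + ‖v‖)

lemma radialCoord_mem_Icc (a v : ℂ) : radialCoord a v ∈ Icc (-1) 1 := by
  have : |‖a‖ - ‖v‖| ≤ ‖a‖ + ‖v‖ := by
    simpa [abs_of_nonneg, sub_eq_add_neg] using abs_sub ‖a‖ ‖v‖
  rw [radialCoord, mem_Icc, ← abs_le, abs_div, abs_of_nonneg (by positivity : 0 ≤ ‖a‖ + ‖v‖)]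
  exact div_le_one_of_le₀ this (by positivity)

lemma norm_sub_mul_norm_sub_mul_abs_radialCoord_sub_le {a : ℂ} (ha : a ≠ 0) (v e : ℂ) :
    ‖v - a‖ * ‖a - e‖ * |radialCoord a v - radialCoord a e| ≤ 2 * ‖a‖ * ‖v - e‖ := by
  have ha' := norm_pos_iff.2 ha
  have hv : 0 < ‖a‖ + ‖v‖ := by positivity
  have he : 0 < ‖a‖ + ‖e‖ := by positivity
  have coord_sub : radialCoord a v - radialCoord a e =
      2 * ‖a‖ * (‖e‖ - ‖v‖) / ((‖a‖ + ‖v‖) * (‖a‖ + ‖e‖)) := by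
    rw [radialCoord, radialCoord]
    field_simp
    ring
  calc ‖v - a‖ * ‖a - e‖ * |radialCoord a v - radialCoord a e|
      = ‖v - a‖ * ‖a - e‖ * (2 * ‖a‖ * |‖e‖ - ‖v‖| / ((‖a‖ + ‖v‖) * (‖a‖ + ‖e‖))) := by
        rw [coord_sub, abs_div, abs_mul, abs_of_pos (mul_pos hv he),
          abs_of_pos (mul_pos two_pos ha')]
    _ ≤ (‖a‖ + ‖v‖) * (‖a‖ + ‖e‖) *
        (2 * ‖a‖ * ‖v - e‖ / ((‖a‖ + ‖v‖) * (‖a‖ + ‖e‖))) := by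
        gcongr
        · exact (norm_sub_le v a).trans_eq (add_comm _ _)
        · exact norm_sub_le a e
        · rw [norm_sub_rev]
          exact abs_norm_sub_norm_le e v
    _ = 2 * ‖a‖ * ‖v - e‖ := by field_simp

lemma ContainsNoCircle.exists_separated_omitted_values (hK : ContainsNoCircle K)
    (hKc : IsCompact K) {a : ℂ} (ha : a ≠ 0) :
    ∃ δ > 0, ∀ t ∈ Ioo (-1 : ℝ) 1, ∃ e ∉ K, ∀ v ∈ K,
      ‖v - a‖ * ‖a - e‖ * max |radialCoord a v - t| δ ≤ 2 * ‖a‖ * ‖v - e‖ := by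
  have ha' := norm_pos_iff.2 ha
  obtain ⟨M, hM, norm_le⟩ := hKc.isBounded.exists_pos_norm_le
  obtain ⟨δ, hδ, separated⟩ := hK.exists_mul_le_dist hKc ha'
  refine ⟨2 * ‖a‖ * δ / (‖a‖ + M), by positivity, fun t ⟨ht, ht'⟩ ↦ ?_⟩
  have ht₁ : 0 < 1 + t := by linarith
  obtain ⟨e, he, hev⟩ := separated (‖a‖ * (1 - t) / (1 + t))
    (div_nonneg (mul_nonneg ha'.le (by linarith)) ht₁.le)
  rw [← he] at hev
  have coord_e : radialCoord a e = t := by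
    rw [radialCoord, he]
    field_simp
    ring
  refine ⟨e, fun heK ↦ ?_, fun v hv ↦ ?_⟩
  · have := hev e heK
    rw [dist_self] at this
    exact absurd this (not_le.2 (by positivity))
  rw [mul_max_of_nonneg _ _ (by positivity)]
  refine max_le ?_ ?_
  · rw [← coord_e]
    exact norm_sub_mul_norm_sub_mul_abs_radialCoord_sub_le ha v e
  · calc ‖v - a‖ * ‖a - e‖ * (2 * ‖a‖ * δ / (‖a‖ + M))
        ≤ (‖a‖ + M) * (‖a‖ + ‖e‖) * (2 * ‖a‖ * δ / (‖a‖ + M)) := by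
          gcongr
          · exact (norm_sub_le v a).trans (by linarith [norm_le v hv])
          · exact norm_sub_le a e
      _ = 2 * ‖a‖ * (δ * (‖a‖ + ‖e‖)) := by field_simp
      _ ≤ 2 * ‖a‖ * ‖v - e‖ := by
          gcongr
          simpa only [dist_eq_norm] using hev v hv

end Separation

section DerivativeBound

open Complex

variable {F : ℂ → ℂ} {c : ℂ} {r : ℝ}

-- The maximum principle for `∏ i, (F z - F c) / (z - c) * (F c - e i) / (F z - e i)`.
lemma norm_deriv_mul_pow_card_le {ι : Type*} {s : Finset ι} {e : ι → ℂ} {B : ℝ} (hr : 0 < r)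
    (hF : DifferentiableOn ℂ F (closedBall c r)) (he : ∀ i ∈ s, e i ∉ F '' closedBall c r)
    (hB : ∀ z ∈ sphere c r, ∏ i ∈ s, ‖F z - F c‖ * ‖F c - e i‖ / ‖F z - e i‖ ≤ B) :
    (‖deriv F c‖ * r) ^ s.card ≤ B := by
  have hFe : ∀ i ∈ s, ∀ z ∈ closedBall c r, F z - e i ≠ 0 :=
    fun i hi z hz ↦ sub_ne_zero.2 fun h ↦ he i hi ⟨z, hz, h⟩
  have hc : c ∈ closedBall c r := mem_closedBall_self hr.le
  set G : ℂ → ℂ := fun z ↦ ∏ i ∈ s, dslope F c z * ((F c - e i) / (F z - e i))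
  have hG : DifferentiableOn ℂ G (closedBall c r) :=
    DifferentiableOn.fun_finsetProd fun i hi ↦
      ((differentiableOn_dslope (closedBall_mem_nhds c hr)).2 hF).mul
        ((differentiableOn_const _).div (hF.sub_const _) (hFe i hi))
  have norm_G_sphere : ∀ z ∈ sphere c r, ‖G z‖ ≤ B / r ^ s.card := by
    intro z hz
    have hzc : z ≠ c := ne_of_mem_sphere hz hr.ne'
    refine le_trans (le_of_eq ?_) (div_le_div_of_nonneg_right (hB z hz) (by positivity))
    rw [norm_prod, ← Finset.prod_const, ← Finset.prod_div_distrib]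
    refine Finset.prod_congr rfl fun i _ ↦ ?_
    rw [dslope_of_ne _ hzc, slope_def_field, norm_mul, norm_div, norm_div,
      mem_sphere_iff_norm.1 hz]
    ring
  have norm_G_center : ‖G c‖ = ‖deriv F c‖ ^ s.card := by
    rw [norm_prod, ← Finset.prod_const]
    refine Finset.prod_congr rfl fun i hi ↦ ?_
    rw [dslope_same, div_self (hFe i hi c hc), mul_one]
  have norm_G_le := norm_le_of_forall_mem_frontier_norm_le isBounded_ball
    (hG.diffContOnCl_ball subset_rfl) (fun z hz ↦ norm_G_sphere z (frontier_ball_subset_sphere hz))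
    (subset_closure (mem_ball_self hr))
  rwa [norm_G_center, le_div_iff₀ (by positivity), ← mul_pow] at norm_G_le

lemma le_of_forall_pow_le_mul_pow {a b C : ℝ} (hb : 0 < b)
    (h : ∀ n : ℕ, n ≠ 0 → a ^ n ≤ C * b ^ n) : a ≤ b := by
  by_contra! hba
  have tendsto_ratio := tendsto_pow_atTop_atTop_of_one_lt ((one_lt_div hb).2 hba)
  obtain ⟨n, hCn, hn⟩ := ((tendsto_ratio.eventually_gt_atTop C).and (eventually_ne_atTop 0)).exists
  rw [div_pow, lt_div_iff₀ (by positivity)] at hCn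
  exact (h n hn).not_gt hCn

lemma prod_chebyshevNodes_norm_ratio_le {n : ℕ} (hn : n ≠ 0) {a v : ℂ} {e : ℝ → ℂ} {δ : ℝ}
    (hδ : 0 < δ) (hv : ∀ t ∈ chebyshevNodes n, v ≠ e t)
    (he : ∀ t ∈ chebyshevNodes n,
      ‖v - a‖ * ‖a - e t‖ * max |radialCoord a v - t| δ ≤ 2 * ‖a‖ * ‖v - e t‖) :
    ∏ t ∈ chebyshevNodes n, ‖v - a‖ * ‖a - e t‖ / ‖v - e t‖ ≤
      (2 / Real.pi * δ)⁻¹ * (4 * ‖a‖) ^ n :=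
  calc ∏ t ∈ chebyshevNodes n, ‖v - a‖ * ‖a - e t‖ / ‖v - e t‖
      ≤ ∏ t ∈ chebyshevNodes n, 2 * ‖a‖ / max |radialCoord a v - t| δ := by
        refine Finset.prod_le_prod (fun _ _ ↦ by positivity) fun t ht ↦ ?_
        rw [div_le_div_iff₀ (norm_pos_iff.2 (sub_ne_zero.2 (hv t ht))) (lt_max_of_lt_right hδ)]
        exact he t ht
    _ = (2 * ‖a‖) ^ n / ∏ t ∈ chebyshevNodes n, max |radialCoord a v - t| δ := by
        rw [Finset.prod_div_distrib, Finset.prod_const, card_chebyshevNodes]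
    _ ≤ (2 * ‖a‖) ^ n / (2 / Real.pi * δ * 2⁻¹ ^ n) := by
        gcongr
        exact mul_two_inv_pow_le_prod_max hn (radialCoord_mem_Icc _ _)
    _ = (2 / Real.pi * δ)⁻¹ * (4 * ‖a‖) ^ n := by
        rw [div_mul_eq_div_div_swap, ← div_pow, div_eq_inv_mul]
        congr 2
        ring

theorem norm_deriv_mul_le_of_containsNoCircle_image_closedBall (hr : 0 < r)
    (hF : DifferentiableOn ℂ F (closedBall c r))
    (hFK : ContainsNoCircle (F '' closedBall c r)) : ‖deriv F c‖ * r ≤ 4 * ‖F c‖ := by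
  have hK : IsCompact (F '' closedBall c r) :=
    (isCompact_closedBall c r).image_of_continuousOn hF.continuousOn
  have hFc : F c ≠ 0 := fun h ↦ hFK.zero_notMem ⟨c, mem_closedBall_self hr.le, h⟩
  obtain ⟨δ, hδ, omitted⟩ := hFK.exists_separated_omitted_values hK hFc
  choose! e he hev using omitted
  refine le_of_forall_pow_le_mul_pow (C := (2 / Real.pi * δ)⁻¹) (by positivity) fun n hn ↦ ?_
  have node_mem {t : ℝ} (ht : t ∈ chebyshevNodes n) : t ∈ Ioo (-1 : ℝ) 1 :=
    coe_chebyshevNodes_subset_Ioo n ht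
  have bound : ∀ z ∈ sphere c r, ∏ t ∈ chebyshevNodes n,
      ‖F z - F c‖ * ‖F c - e t‖ / ‖F z - e t‖ ≤ (2 / Real.pi * δ)⁻¹ * (4 * ‖F c‖) ^ n := by
    intro z hz
    have hz' : F z ∈ F '' closedBall c r := mem_image_of_mem F (sphere_subset_closedBall hz)
    exact prod_chebyshevNodes_norm_ratio_le hn hδ
      (fun t ht ↦ ne_of_mem_of_not_mem hz' (he t (node_mem ht)))
      (fun t ht ↦ hev t (node_mem ht) _ hz')
  simpa only [card_chebyshevNodes] using
    norm_deriv_mul_pow_card_le hr hF (fun t ht ↦ he t (node_mem ht)) bound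

theorem norm_deriv_mul_le_of_containsNoCircle_image_ball (hr : 0 < r)
    (hF : DifferentiableOn ℂ F (ball c r)) (hFB : ContainsNoCircle (F '' ball c r)) :
    ‖deriv F c‖ * r ≤ 4 * ‖F c‖ := by
  have bound : ∀ᶠ ρ in 𝓝[<] r, ‖deriv F c‖ * ρ ≤ 4 * ‖F c‖ := by
    filter_upwards [Ioo_mem_nhdsLT hr] with ρ hρ
    have closedBall_subset := closedBall_subset_ball (x := c) hρ.2
    exact norm_deriv_mul_le_of_containsNoCircle_image_closedBall hρ.1
      (hF.mono closedBall_subset) (hFB.mono (image_mono closedBall_subset))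
  exact le_of_tendsto (((continuous_const_mul _).tendsto r).mono_left nhdsWithin_le_nhds) bound

end DerivativeBound

section UnitDisk

open Complex
open scoped ComplexConjugate

variable {a ζ : ℂ}

/-- The Möbius automorphism of the unit disk that maps `0` to `a`. -/
noncomputable def diskAutomorphism (a ζ : ℂ) : ℂ := (ζ + a) / (1 + conj a * ζ)

lemma diskAutomorphism_zero (a : ℂ) : diskAutomorphism a 0 = a := by
  simp [diskAutomorphism]

lemma one_add_conj_mul_ne_zero (ha : ‖a‖ < 1) (hζ : ‖ζ‖ < 1) : 1 + conj a * ζ ≠ 0 := by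
  intro h
  have : ‖conj a * ζ‖ = 1 := by rw [eq_neg_of_add_eq_zero_right h, norm_neg, norm_one]
  rw [norm_mul, norm_conj] at this
  nlinarith [norm_nonneg a, norm_nonneg ζ]

lemma norm_one_add_conj_mul_sq_sub (a ζ : ℂ) :
    ‖1 + conj a * ζ‖ ^ 2 - ‖ζ + a‖ ^ 2 = (1 - ‖a‖ ^ 2) * (1 - ‖ζ‖ ^ 2) := by
  simp only [← normSq_eq_norm_sq, normSq_apply, add_re, add_im, mul_re, mul_im, conj_re, conj_im,
    one_re, one_im]
  ring

lemma mapsTo_diskAutomorphism (ha : ‖a‖ < 1) :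
    MapsTo (diskAutomorphism a) (ball 0 1) (ball 0 1) := by
  intro ζ hζ
  rw [mem_ball_zero_iff] at hζ ⊢
  rw [diskAutomorphism, norm_div, div_lt_one (norm_pos_iff.2 (one_add_conj_mul_ne_zero ha hζ))]
  have : 0 < (1 - ‖a‖ ^ 2) * (1 - ‖ζ‖ ^ 2) :=
    mul_pos (by nlinarith [norm_nonneg a]) (by nlinarith [norm_nonneg ζ])
  refine lt_of_pow_lt_pow_left₀ 2 (norm_nonneg _) ?_
  linarith [norm_one_add_conj_mul_sq_sub a ζ]

lemma differentiableOn_diskAutomorphism (ha : ‖a‖ < 1) :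
    DifferentiableOn ℂ (diskAutomorphism a) (ball 0 1) :=
  DifferentiableOn.div (by fun_prop) (by fun_prop)
    fun _ hζ ↦ one_add_conj_mul_ne_zero ha (mem_ball_zero_iff.1 hζ)

lemma hasDerivAt_diskAutomorphism_zero (a : ℂ) :
    HasDerivAt (diskAutomorphism a) ((1 - ‖a‖ ^ 2 : ℝ) : ℂ) 0 := by
  have num : HasDerivAt (fun ζ ↦ ζ + a) 1 0 := (hasDerivAt_id 0).add_const a
  have den : HasDerivAt (fun ζ ↦ 1 + conj a * ζ) (conj a) 0 := by
    simpa using ((hasDerivAt_id (0 : ℂ)).const_mul (conj a)).const_add 1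
  refine (num.div den (by simp)).congr_deriv ?_
  simp [← mul_conj']

theorem norm_deriv_mul_one_sub_norm_sq_le_of_containsNoCircle {f : ℂ → ℂ}
    (hf : DifferentiableOn ℂ f (ball 0 1)) (hfB : ContainsNoCircle (f '' ball 0 1))
    (ha : a ∈ ball (0 : ℂ) 1) : ‖deriv f a‖ * (1 - ‖a‖ ^ 2) ≤ 4 * ‖f a‖ := by
  have ha' : ‖a‖ < 1 := mem_ball_zero_iff.1 ha
  have hfa : HasDerivAt f (deriv f a) (diskAutomorphism a 0) := by
    rw [diskAutomorphism_zero]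
    exact (hf.differentiableAt (isOpen_ball.mem_nhds ha)).hasDerivAt
  have deriv_comp := (hfa.comp 0 (hasDerivAt_diskAutomorphism_zero a)).deriv
  have := norm_deriv_mul_le_of_containsNoCircle_image_ball one_pos
    (hf.comp (differentiableOn_diskAutomorphism ha') (mapsTo_diskAutomorphism ha'))
    (hfB.mono (by rw [image_comp]; exact image_mono (mapsTo_diskAutomorphism ha').image_subset))
  rwa [deriv_comp, mul_one, norm_mul, Complex.norm_of_nonneg (by nlinarith [norm_nonneg a]),
    Function.comp_apply, diskAutomorphism_zero] at this

lemma norm_deriv_mul_one_sub_norm_sq_le_four {k : ℂ → ℂ} (hk : DifferentiableOn ℂ k (ball 0 1))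
    (hkB : ContainsNoCircle ((fun z ↦ exp (k z)) '' ball 0 1)) (ha : a ∈ ball (0 : ℂ) 1) :
    ‖deriv k a‖ * (1 - ‖a‖ ^ 2) ≤ 4 := by
  have := norm_deriv_mul_one_sub_norm_sq_le_of_containsNoCircle hk.cexp hkB ha
  rw [deriv_cexp (hk.differentiableAt (isOpen_ball.mem_nhds ha)), norm_mul, mul_assoc,
    mul_comm 4] at this
  exact le_of_mul_le_mul_left this (norm_pos_iff.2 (exp_ne_zero _))

lemma hasDerivAt_log_one_add_sub_log_one_sub {t s : ℝ} (h : |t * s| < 1) :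
    HasDerivAt (fun t ↦ Real.log (1 + t * s) - Real.log (1 - t * s))
      (2 * s / (1 - (t * s) ^ 2)) t := by
  obtain ⟨hlt, hlt'⟩ := abs_lt.1 h
  have hadd : 1 + t * s ≠ 0 := by linarith
  have hsub : 1 - t * s ≠ 0 := by linarith
  have hmul : HasDerivAt (fun t ↦ t * s) s t := hasDerivAt_mul_const s
  refine (((hmul.const_add 1).log hadd).sub ((hmul.const_sub 1).log hsub)).congr_deriv ?_
  have : 1 - (t * s) ^ 2 = (1 + t * s) * (1 - t * s) := by ring
  rw [this, div_sub_div _ _ hadd hsub]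
  congr 1
  ring

lemma hasDerivAt_comp_ofReal_mul {E : Type*} [NormedAddCommGroup E] [NormedSpace ℂ E] {k : ℂ → E}
    {k' : E} {t : ℝ} {z : ℂ} (hk : HasDerivAt k k' (t * z)) :
    HasDerivAt (fun t : ℝ ↦ k (t * z)) (z • k') t := by
  have hmul : HasDerivAt (fun t : ℝ ↦ (t : ℂ) * z) z t := by
    simpa using (hasDerivAt_id t).ofReal_comp.mul_const z
  exact hk.scomp_of_eq t hmul rfl

-- Compare `t ↦ k (t • z)` with `t ↦ log ((1 + t‖z‖) / (1 - t‖z‖))`.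
theorem norm_sub_le_mul_log_of_norm_deriv_mul_le {E : Type*} [NormedAddCommGroup E]
    [NormedSpace ℂ E] {k : ℂ → E} {C : ℝ} (hk : DifferentiableOn ℂ k (ball 0 1))
    (hC : ∀ a ∈ ball (0 : ℂ) 1, ‖deriv k a‖ * (1 - ‖a‖ ^ 2) ≤ C) {z : ℂ} (hz : z ∈ ball 0 1) :
    ‖k z - k 0‖ ≤ C / 2 * Real.log ((1 + ‖z‖) / (1 - ‖z‖)) := by
  have hz' : ‖z‖ < 1 := mem_ball_zero_iff.1 hz
  have norm_mul_z {t : ℝ} (ht : t ∈ Icc (0 : ℝ) 1) : ‖(t : ℂ) * z‖ = t * ‖z‖ := by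
    rw [norm_mul, Complex.norm_of_nonneg ht.1]
  have abs_mul_lt {t : ℝ} (ht : t ∈ Icc (0 : ℝ) 1) : |t * ‖z‖| < 1 := by
    rw [abs_of_nonneg (mul_nonneg ht.1 (norm_nonneg z))]
    exact (mul_le_of_le_one_left (norm_nonneg z) ht.2).trans_lt hz'
  have mul_mem {t : ℝ} (ht : t ∈ Icc (0 : ℝ) 1) : (t : ℂ) * z ∈ ball (0 : ℂ) 1 := by
    rw [mem_ball_zero_iff, norm_mul_z ht]
    exact (le_abs_self _).trans_lt (abs_mul_lt ht)
  have deriv_path {t : ℝ} (ht : t ∈ Icc (0 : ℝ) 1) :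
      HasDerivAt (fun t : ℝ ↦ k (t * z) - k 0) (z • deriv k (t * z)) t :=
    (hasDerivAt_comp_ofReal_mul
      (hk.differentiableAt (isOpen_ball.mem_nhds (mul_mem ht))).hasDerivAt).sub_const _
  have deriv_bound {t : ℝ} (ht : t ∈ Icc (0 : ℝ) 1) :=
    (hasDerivAt_log_one_add_sub_log_one_sub (abs_mul_lt ht)).const_mul (C / 2)
  have norm_deriv_le {t : ℝ} (ht : t ∈ Icc (0 : ℝ) 1) :
      ‖z • deriv k (t * z)‖ ≤ C / 2 * (2 * ‖z‖ / (1 - (t * ‖z‖) ^ 2)) := by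
    have hCt := hC _ (mul_mem ht)
    rw [norm_mul_z ht] at hCt
    have hpos : 0 < 1 - (t * ‖z‖) ^ 2 := by
      linarith [(sq_lt_one_iff_abs_lt_one _).2 (abs_mul_lt ht)]
    rw [norm_smul, mul_div_assoc', le_div_iff₀ hpos]
    nlinarith [norm_nonneg z]
  have := image_norm_le_of_norm_deriv_right_le_deriv_boundary'
    (fun t ht ↦ (deriv_path ht).continuousAt.continuousWithinAt)
    (fun t ht ↦ (deriv_path (Ico_subset_Icc_self ht)).hasDerivWithinAt) (by simp)
    (fun t ht ↦ (deriv_bound ht).continuousAt.continuousWithinAt)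
    (fun t ht ↦ (deriv_bound (Ico_subset_Icc_self ht)).hasDerivWithinAt)
    (fun t ht ↦ norm_deriv_le (Ico_subset_Icc_self ht)) (right_mem_Icc.2 zero_le_one)
  rw [Real.log_div (by positivity) (by linarith)]
  simpa only [ofReal_one, one_mul] using this

end UnitDisk

lemma div_pow_le_exp_and_exp_le_div_pow {a b x : ℝ} (ha : 0 < a) (hb : 0 < b) (p : ℕ)
    (hx : |x| ≤ 2 * Real.log (b / a)) :
    (a / b) ^ (2 * p) ≤ Real.exp x ^ p ∧ Real.exp x ^ p ≤ (b / a) ^ (2 * p) := by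
  have exp_two_log : Real.exp (2 * Real.log (b / a)) = (b / a) ^ 2 := by
    rw [← Nat.cast_two, Real.exp_nat_mul, Real.exp_log (by positivity)]
  have exp_neg_two_log : Real.exp (-(2 * Real.log (b / a))) = (a / b) ^ 2 := by
    rw [Real.exp_neg, exp_two_log, ← inv_pow, inv_div]
  obtain ⟨lower, upper⟩ := abs_le.1 hx
  rw [pow_mul, pow_mul, ← exp_two_log, ← exp_neg_two_log]
  constructor <;> gcongr

/-- Hayman's distortion theorem: if `g` is analytic, nowhere vanishing and `p`-valent in
the unit disk, then `((1-|z|)/(1+|z|))^{2p} ≤ |g(z)/g(0)| ≤ ((1+|z|)/(1-|z|))^{2p}`. -/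
theorem statement7 (g : ℂ → ℂ) (p : ℕ)
    (hg : AnalyticOnNhd ℂ g (Metric.ball (0 : ℂ) 1))
    (hnz : ∀ z ∈ Metric.ball (0 : ℂ) 1, g z ≠ 0)
    (hval : IsPValentOn g (Metric.ball (0 : ℂ) 1) p) :
    ∀ z ∈ Metric.ball (0 : ℂ) 1,
      ((1 - ‖z‖) / (1 + ‖z‖)) ^ (2 * p) ≤ ‖g z / g 0‖ ∧
      ‖g z / g 0‖ ≤
        ((1 + ‖z‖) / (1 - ‖z‖)) ^ (2 * p) := by
  have isSimplyConnected_ball : IsSimplyConnected (ball (0 : ℂ) 1) :=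
    have := contractibleSpace_ball (x := (0 : ℂ)) one_pos
    SimplyConnectedSpace.ofContractible _
  have hp : p ≠ 0 := hval.ne_zero hg (nonempty_ball.2 one_pos)
  obtain ⟨k, hk, hkg⟩ := exists_differentiableOn_exp_pow_eq hp isSimplyConnected_ball
    isOpen_ball hg.differentiableOn hnz
  have noCircle : ContainsNoCircle ((fun z ↦ Complex.exp (k z)) '' ball 0 1) := by
    refine containsNoCircle_image_exp isOpen_ball (convex_ball _ _).isPreconnected hk hp fun c ↦ ?_
    refine (encard_le_encard ?_).trans (hval.encard_fiber_le hg c)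
    exact fun z hz ↦ ⟨hz.1, hkg z hz.1 ▸ hz.2⟩
  intro z hz
  have growth : ‖k z - k 0‖ ≤ 4 / 2 * Real.log ((1 + ‖z‖) / (1 - ‖z‖)) :=
    norm_sub_le_mul_log_of_norm_deriv_mul_le hk
      (fun a ha ↦ norm_deriv_mul_one_sub_norm_sq_le_four hk noCircle ha) hz
  have norm_ratio : ‖g z / g 0‖ = Real.exp (k z - k 0).re ^ p := by
    rw [← hkg z hz, ← hkg 0 (mem_ball_self one_pos), ← div_pow, ← Complex.exp_sub, norm_pow,
      Complex.norm_exp]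
  rw [norm_ratio]
  exact div_pow_le_exp_and_exp_le_div_pow (by linarith [mem_ball_zero_iff.1 hz]) (by positivity) p
    ((Complex.abs_re_le_norm _).trans (growth.trans_eq (by norm_num)))
end

section
/- Let p ≥ 1 and N ≥ 10p + 1 be integers, and let f(x) = x^p + x^N. Then for every s = 0, 1, …, p−1, the function f is (s,p)-valent in the disk D_{1/3} = {z ∈ ℂ : |z| < 1/3}: for every polynomial P of degree at most p−1, the equation f(x) = P(x) has at most p solutions in D_{1/3}, counted with multiplicity. -/
/-!
If `p + 1` zeros, repeated ones included, of a polynomial `F` lie in the disk of radius `r`, then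
the divided difference of `F` at these zeros vanishes. Divided differences of order `p` kill
`X ^ j` for `j < p`, send `X ^ p` to `1`, and send `X ^ j` for `j > p` to the complete homogeneous
symmetric polynomial of degree `j - p` in the nodes, which is a sum of `j.choose p` monomials of
modulus at most `r ^ (j - p)`. So the coefficient of `X ^ p` cannot dominate the weighted sum of
the higher ones. Subtracting a polynomial of degree less than `p` changes none of these
coefficients.
-/

open Polynomial

section DividedDifference

variable {R : Type*} [CommRing R]

/-- The divided difference of the polynomial `F` at the nodes `s`, which may coincide. Repeated
nodes are handled by defining it as the top coefficient of the Hermite interpolant of `F` at `s`,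
which is the remainder of `F` modulo `∏ a ∈ s, (X - a)`. It is zero if `s` is empty. -/
noncomputable def dividedDifference (s : Multiset R) : R[X] →ₗ[R] R :=
  lcoeff R (s.card - 1) ∘ₗ modByMonicHom (s.map fun a => X - C a).prod

theorem dividedDifference_apply (s : Multiset R) (F : R[X]) :
    dividedDifference s F = (F %ₘ (s.map fun a => X - C a).prod).coeff (s.card - 1) :=
  rfl

theorem degree_multiset_prod_X_sub_C_eq_card [Nontrivial R] (s : Multiset R) :
    (s.map fun a => X - C a).prod.degree = (s.card : WithBot ℕ) := by
  rw [degree_eq_natDegree (monic_multisetProd_X_sub_C s).ne_zero,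
    natDegree_multiset_prod_X_sub_C_eq_card]

theorem dividedDifference_singleton (x : R) (F : R[X]) : dividedDifference {x} F = F.eval x := by
  simp [dividedDifference_apply, modByMonic_X_sub_C_eq_C_eval]

theorem dividedDifference_eq_zero_of_dvd {s : Multiset R} {F : R[X]}
    (h : (s.map fun a => X - C a).prod ∣ F) : dividedDifference s F = 0 := by
  rw [dividedDifference_apply,
    (modByMonic_eq_zero_iff_dvd (monic_multisetProd_X_sub_C s)).2 h, coeff_zero]

theorem dividedDifference_eq_coeff_of_degree_lt {s : Multiset R} {F : R[X]}
    (h : F.degree < s.card) : dividedDifference s F = F.coeff (s.card - 1) := by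
  nontriviality R
  rw [← degree_multiset_prod_X_sub_C_eq_card] at h
  rw [dividedDifference_apply, (modByMonic_eq_self_iff (monic_multisetProd_X_sub_C s)).2 h]

theorem mul_modByMonic_mul {Q S : R[X]} (hQ : Q.Monic) (hS : S.Monic) (F : R[X]) :
    (S * F) %ₘ (S * Q) = S * (F %ₘ Q) := by
  nontriviality R
  refine (div_modByMonic_unique (F /ₘ Q) _ (hS.mul hQ) ⟨?_, ?_⟩).2
  · linear_combination S * modByMonic_add_div F Q
  · rw [mul_comm S, mul_comm S, hS.degree_mul, hS.degree_mul]
    exact WithBot.add_lt_add_right (degree_ne_bot.2 hS.ne_zero) (degree_modByMonic_lt F hQ)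

theorem dividedDifference_cons_X_sub_C_mul (x : R) (s : Multiset R) (F : R[X]) :
    dividedDifference (x ::ₘ s) ((X - C x) * F) = dividedDifference s F := by
  nontriviality R
  have hmonic := monic_multisetProd_X_sub_C s
  rw [dividedDifference_apply, dividedDifference_apply, Multiset.map_cons, Multiset.prod_cons,
    mul_modByMonic_mul hmonic (monic_X_sub_C x), Multiset.card_cons, Nat.add_sub_cancel]
  have hdeg := degree_modByMonic_lt F hmonic
  rw [degree_multiset_prod_X_sub_C_eq_card] at hdeg
  rcases hcard : s.card with _ | m
  · simp [Multiset.card_eq_zero.1 hcard]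
  · rw [hcard] at hdeg
    rw [sub_mul, coeff_sub, coeff_X_mul, coeff_C_mul, coeff_eq_zero_of_degree_lt hdeg, mul_zero,
      sub_zero, Nat.add_sub_cancel]

theorem dividedDifference_cons_X_mul (x : R) (s : Multiset R) (F : R[X]) :
    dividedDifference (x ::ₘ s) (X * F) =
      x * dividedDifference (x ::ₘ s) F + dividedDifference s F := by
  have hsplit : X * F = x • F + (X - C x) * F := by
    rw [smul_eq_C_mul]
    ring
  rw [hsplit, map_add, map_smul, smul_eq_mul, dividedDifference_cons_X_sub_C_mul]

theorem dividedDifference_eq_coeff_add_sum {s : Multiset R} {p : ℕ} (hs : s.card = p + 1)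
    (F : R[X]) :
    dividedDifference s F =
      F.coeff p + ∑ j ∈ F.support with p < j, F.coeff j * dividedDifference s (X ^ j) := by
  nontriviality R
  have hlow (j : ℕ) (hj : j ≤ p) : dividedDifference s (X ^ j) = (X ^ j : R[X]).coeff p := by
    rw [dividedDifference_eq_coeff_of_degree_lt, hs, Nat.add_sub_cancel]
    rw [degree_X_pow, hs]
    exact_mod_cast Nat.lt_succ_of_le hj
  have hexpand (L : R[X] →ₗ[R] R) : L F = ∑ j ∈ F.support, F.coeff j * L (X ^ j) := by
    conv_lhs => rw [F.as_sum_support_C_mul_X_pow]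
    simp only [map_sum, ← smul_eq_C_mul, map_smul, smul_eq_mul]
  have hcoeff : ∑ j ∈ F.support with ¬p < j, F.coeff j * dividedDifference s (X ^ j) =
      F.coeff p := by
    rw [← lcoeff_apply, hexpand (lcoeff R p), Finset.sum_filter]
    refine Finset.sum_congr rfl fun j _ => ?_
    split_ifs with hj
    · rw [lcoeff_apply, coeff_X_pow, if_neg hj.ne, mul_zero]
    · rw [hlow j (not_lt.1 hj), lcoeff_apply]
  rw [hexpand, ← hcoeff, Finset.sum_filter_not_add_sum_filter]

end DividedDifference

theorem norm_dividedDifference_cons_X_mul_le {R : Type*} [SeminormedCommRing R] (x : R)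
    (s : Multiset R) (F : R[X]) :
    ‖dividedDifference (x ::ₘ s) (X * F)‖ ≤
      ‖x‖ * ‖dividedDifference (x ::ₘ s) F‖ + ‖dividedDifference s F‖ := by
  rw [dividedDifference_cons_X_mul]
  exact norm_add_le_of_le (norm_mul_le _ _) le_rfl

section NormBound

variable {R : Type*} [SeminormedCommRing R] [NormOneClass R] {r : ℝ} {s : Multiset R}

-- `dividedDifference_cons_X_mul` matches Pascal's rule, which drives the induction on `N`. The
-- factor `r ^ m` on the left avoids the truncated exponent `N - m`.
theorem norm_dividedDifference_X_pow_mul_le (N : ℕ) {m : ℕ} (hs : s.card = m + 1)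
    (hr : ∀ x ∈ s, ‖x‖ ≤ r) :
    ‖dividedDifference s (X ^ N)‖ * r ^ m ≤ N.choose m * r ^ N := by
  have : Nontrivial R := NormOneClass.nontrivial
  induction N generalizing m s with
  | zero =>
    have hdeg : (X ^ 0 : R[X]).degree < s.card := by
      rw [degree_X_pow, hs]
      exact_mod_cast m.succ_pos
    rw [dividedDifference_eq_coeff_of_degree_lt hdeg, hs, Nat.add_sub_cancel]
    cases m <;> simp [coeff_one]
  | succ N ih =>
    rcases m with _ | m
    · obtain ⟨x, rfl⟩ := Multiset.card_eq_one.1 hs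
      rw [dividedDifference_singleton, eval_pow, eval_X, pow_zero, mul_one, Nat.choose_zero_right,
        Nat.cast_one, one_mul]
      exact (norm_pow_le x _).trans (pow_le_pow_left₀ (norm_nonneg x) (hr x (by simp)) _)
    obtain ⟨x, hx⟩ := Multiset.card_pos_iff_exists_mem.1 (show 0 < s.card by omega)
    obtain ⟨t, rfl⟩ := Multiset.exists_cons_of_mem hx
    have hxr : ‖x‖ ≤ r := hr x hx
    have hr0 : 0 ≤ r := (norm_nonneg x).trans hxr
    have hcons := ih hs hr
    have htail := ih (by simpa using hs) fun y hy => hr y (Multiset.mem_cons_of_mem hy)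
    calc ‖dividedDifference (x ::ₘ t) (X ^ (N + 1))‖ * r ^ (m + 1)
        ≤ (r * ‖dividedDifference (x ::ₘ t) (X ^ N)‖ + ‖dividedDifference t (X ^ N)‖) *
            r ^ (m + 1) := by
          rw [pow_succ' X]
          grw [norm_dividedDifference_cons_X_mul_le, hxr]
      _ = r * (‖dividedDifference (x ::ₘ t) (X ^ N)‖ * r ^ (m + 1)) +
            r * (‖dividedDifference t (X ^ N)‖ * r ^ m) := by ring
      _ ≤ r * (N.choose (m + 1) * r ^ N) + r * (N.choose m * r ^ N) := by gcongr
      _ = (N + 1).choose (m + 1) * r ^ (N + 1) := by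
          rw [Nat.choose_succ_succ']
          push_cast
          ring

theorem norm_coeff_mul_pow_le_of_prod_X_sub_C_dvd {p : ℕ} (hs : s.card = p + 1)
    (hr : ∀ x ∈ s, ‖x‖ ≤ r) {F : R[X]} (hF : (s.map fun a => X - C a).prod ∣ F) :
    ‖F.coeff p‖ * r ^ p ≤ ∑ j ∈ F.support with p < j, ‖F.coeff j‖ * (j.choose p * r ^ j) := by
  obtain ⟨x, hx⟩ := Multiset.card_pos_iff_exists_mem.1 (show 0 < s.card by omega)
  have hr0 : 0 ≤ r := (norm_nonneg x).trans (hr x hx)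
  have hsum := dividedDifference_eq_coeff_add_sum hs F
  rw [dividedDifference_eq_zero_of_dvd hF] at hsum
  calc ‖F.coeff p‖ * r ^ p
      = ‖∑ j ∈ F.support with p < j, F.coeff j * dividedDifference s (X ^ j)‖ * r ^ p := by
        rw [eq_neg_of_add_eq_zero_left hsum.symm, norm_neg]
    _ ≤ (∑ j ∈ F.support with p < j, ‖F.coeff j‖ * ‖dividedDifference s (X ^ j)‖) * r ^ p := by
        gcongr
        exact norm_sum_le_of_le _ fun j _ => norm_mul_le _ _
    _ = ∑ j ∈ F.support with p < j, ‖F.coeff j‖ * (‖dividedDifference s (X ^ j)‖ * r ^ p) := by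
        simp only [Finset.sum_mul, mul_assoc]
    _ ≤ ∑ j ∈ F.support with p < j, ‖F.coeff j‖ * (j.choose p * r ^ j) := by
        refine Finset.sum_le_sum fun j _ => mul_le_mul_of_nonneg_left ?_ (norm_nonneg _)
        exact norm_dividedDifference_X_pow_mul_le j hs hr

end NormBound

open scoped Classical in
theorem card_roots_filter_mem_ball_le_of_sum_lt {K : Type*} [NormedField K] {r : ℝ} {p : ℕ}
    {F : K[X]}
    (h : ∑ j ∈ F.support with p < j, ‖F.coeff j‖ * (j.choose p * r ^ j) < ‖F.coeff p‖ * r ^ p) :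
    (F.roots.filter (· ∈ Metric.ball 0 r)).card ≤ p := by
  have hF : F ≠ 0 := by
    rintro rfl
    simp at h
  by_contra! hcard
  obtain ⟨s, hs⟩ := Multiset.card_pos_iff_exists_mem.1 <|
    (Multiset.card_powersetCard (p + 1) _).symm ▸ Nat.choose_pos (Nat.succ_le_of_lt hcard)
  obtain ⟨hsub, hs⟩ := Multiset.mem_powersetCard.1 hs
  have hball (x : K) (hx : x ∈ s) : ‖x‖ ≤ r :=
    (mem_ball_zero_iff.1 (Multiset.mem_filter.1 (Multiset.mem_of_le hsub hx)).2).le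
  have hdvd : (s.map fun a => X - C a).prod ∣ F :=
    (Multiset.prod_X_sub_C_dvd_iff_le_roots hF s).2 (hsub.trans (Multiset.filter_le _ _))
  exact h.not_ge (norm_coeff_mul_pow_le_of_prod_X_sub_C_dvd hs hball hdvd)

theorem analyticOrderAt_eval {K : Type*} [NontriviallyNormedField K] {F : K[X]} (hF : F ≠ 0)
    (z : K) : analyticOrderAt (fun w => F.eval w) z = F.rootMultiplicity z := by
  have hanalytic (Q : K[X]) : AnalyticAt K (fun w => Q.eval w) z :=
    AnalyticOnNhd.eval_polynomial Q z (Set.mem_univ z)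
  obtain ⟨Q, hQ, hndvd⟩ := exists_eq_pow_rootMultiplicity_mul_and_not_dvd F hF z
  refine (hanalytic F).analyticOrderAt_eq_natCast.2
    ⟨_, hanalytic Q, fun hroot => hndvd (dvd_iff_isRoot.2 hroot), .of_forall fun w => ?_⟩
  conv_lhs => rw [hQ]
  simp

theorem tsum_multiset_count {α : Type*} [DecidableEq α] (s : Multiset α) :
    ∑' a, (s.count a : ℕ∞) = s.card := by
  rw [tsum_eq_sum (s := s.toFinset) (by simp), ← Nat.cast_sum, Multiset.toFinset_sum_count_eq]

open scoped Classical in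
theorem solCount_eval {F : ℂ[X]} (hF : F ≠ 0) (Ω : Set ℂ) :
    solCount (fun z => F.eval z) Ω = (F.roots.filter (· ∈ Ω)).card := by
  have hord (z : ℂ) : ordAt (fun w => F.eval w) z = F.roots.count z := by
    rw [ordAt, dif_pos (F.differentiable.analyticAt z), analyticOrderAt_eval hF, count_roots]
  rw [solCount, tsum_subtype Ω (ordAt fun w => F.eval w), ← tsum_multiset_count]
  simp only [Set.indicator_apply, hord, Multiset.count_filter, Nat.cast_ite, Nat.cast_zero]

theorem isSPValentOn_eval_ball_of_sum_lt {F : ℂ[X]} {r : ℝ} {p s : ℕ} (hs : s < p)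
    (h : ∑ j ∈ F.support with p < j, ‖F.coeff j‖ * (j.choose p * r ^ j) < ‖F.coeff p‖ * r ^ p) :
    IsSPValentOn (fun z => F.eval z) (Metric.ball 0 r) s p := by
  classical
  intro P hP
  have hcoeff (j : ℕ) (hj : p ≤ j) : (F - P).coeff j = F.coeff j := by
    have hlt : P.degree < j := hP.trans_lt (by exact_mod_cast hs.trans_le hj)
    rw [coeff_sub, coeff_eq_zero_of_degree_lt hlt, sub_zero]
  have hsupport : {j ∈ (F - P).support | p < j} = {j ∈ F.support | p < j} := by
    ext j
    simp only [Finset.mem_filter, mem_support_iff, and_congr_left_iff]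
    intro hj
    rw [hcoeff j hj.le]
  have hlt : ∑ j ∈ (F - P).support with p < j, ‖(F - P).coeff j‖ * (j.choose p * r ^ j) <
      ‖(F - P).coeff p‖ * r ^ p := by
    rw [hsupport, hcoeff p le_rfl]
    refine h.trans_eq' (Finset.sum_congr rfl fun j hj => ?_)
    rw [hcoeff j (Finset.mem_filter.1 hj).2.le]
  have hne : F - P ≠ 0 := by
    intro h0
    simp [h0] at hlt
  simp only [← eval_sub]
  rw [solCount_eval hne]
  exact_mod_cast card_roots_filter_mem_ball_le_of_sum_lt hlt

theorem choose_mul_third_pow_lt {p N : ℕ} (hp : 0 < p) (hN : 10 * p ≤ N) :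
    N.choose p * (1 / 3 : ℝ) ^ N < (1 / 3) ^ p := by
  calc N.choose p * (1 / 3 : ℝ) ^ N
      ≤ 2 ^ N * (1 / 3) ^ N := by
        gcongr
        exact_mod_cast Nat.choose_le_two_pow N p
    _ = (2 / 3) ^ N := by
        rw [← mul_pow]
        norm_num
    _ ≤ (2 / 3) ^ (10 * p) := pow_le_pow_of_le_one (by norm_num) (by norm_num) hN
    _ = ((2 / 3) ^ 10) ^ p := pow_mul _ _ _
    _ < (1 / 3) ^ p := pow_lt_pow_left₀ (by norm_num) (by norm_num) hp.ne'

theorem statement9_general {p N : ℕ} {r : ℝ} (hr : 0 ≤ r) (h : N.choose p * r ^ N < r ^ p) {s : ℕ}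
    (hs : s < p) :
    IsSPValentOn (fun x : ℂ => x ^ p + x ^ N) (Metric.ball 0 r) s p := by
  have hNp : N ≠ p := by
    rintro rfl
    simp at h
  have hcoeff (j : ℕ) (hj : p < j) :
      ‖(X ^ p + X ^ N : ℂ[X]).coeff j‖ = if j = N then 1 else 0 := by
    rw [coeff_add, coeff_X_pow, coeff_X_pow, if_neg hj.ne', zero_add]
    split_ifs <;> simp
  have hp : ‖(X ^ p + X ^ N : ℂ[X]).coeff p‖ = 1 := by
    simp [coeff_X_pow, hNp.symm]
  have hlt : ∑ j ∈ (X ^ p + X ^ N : ℂ[X]).support with p < j,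
      ‖(X ^ p + X ^ N : ℂ[X]).coeff j‖ * (j.choose p * r ^ j) <
        ‖(X ^ p + X ^ N : ℂ[X]).coeff p‖ * r ^ p := by
    rw [hp, one_mul]
    refine h.trans_le' ?_
    rw [Finset.sum_congr rfl fun j hj => by rw [hcoeff j (Finset.mem_filter.1 hj).2]]
    simp only [ite_mul, one_mul, zero_mul, Finset.sum_ite_eq']
    split_ifs
    · exact le_rfl
    · positivity
  simpa using isSPValentOn_eval_ball_of_sum_lt hs hlt

/-- For `f(x) = x^p + x^N` with `N ≥ 10p + 1`, the function `f` is `(s,p)`-valent in the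
disk `D_{1/3}` for every `s = 0, 1, …, p - 1`. -/
theorem statement9 (p N : ℕ) (hp : 1 ≤ p) (hN : 10 * p + 1 ≤ N) :
    ∀ s : ℕ, s < p →
      IsSPValentOn (fun x : ℂ => x ^ p + x ^ N)
        (Metric.ball (0 : ℂ) (1 / 3)) s p := by
  intro s hs
  exact statement9_general (by norm_num) (choose_mul_third_pow_lt hp (by omega)) hs
end

section
/- (Cartan's lemma) Let α > 0, ε > 0, and let P(z) be a monic polynomial of degree d over ℂ. Then the sublevel set V_{ε^d}(P) = {z ∈ ℂ : |P(z)| ≤ ε^d} can be covered by p ≤ d closed disks D_{r_1}, …, D_{r_p} with radii r_j > 0 satisfying Σ_{j=1}^p r_j^α ≤ e·(2ε)^α. -/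
/-!
Call a point sparse for a multiset `s` of `n` points if, for each `m > 0`, fewer than `m` points of
`s` lie within distance `ρ m` of it. The distances from a sparse point to the points of `s`, taken
in increasing order, strictly exceed `ρ 1, ρ 2, …, ρ n`, so their product exceeds `∏ ρ k`. The
other points are covered greedily: choose the largest `k` for which some closed ball of radius `ρ k`
contains at least `k` points of `s`; it contains exactly `k`, and the ball of twice the radius
covers every point that becomes sparse when these `k` are removed. The multiplicities `k` of the
chosen balls add up to `n`, so with `ρ k ^ α` linear in `k` the sum of the `α`-th powers of the
radii is determined, and `n ^ n / n! ≤ exp n` is what makes `∏ ρ k` as large as `ε ^ n`.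
-/

open Finset Metric

theorem countP_le_countP_of_imp {ι : Type*} {p q : ι → Prop} [DecidablePred p] [DecidablePred q]
    (s : Multiset ι) (hpq : ∀ a, p a → q a) : s.countP p ≤ s.countP q := by
  simpa only [Multiset.countP_eq_card_filter] using
    Multiset.card_le_card (Multiset.monotone_filter_right s hpq)

theorem prod_range_lt_multiset_prod {R : Type*} [CommSemiring R] [LinearOrder R]
    [IsStrictOrderedRing R] {ρ : ℕ → R} (hρ : ∀ m, 0 < m → 0 < ρ m) {t : Multiset R}
    (ht : t ≠ 0) (hcount : ∀ m, 0 < m → t.countP (· ≤ ρ m) < m) :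
    ∏ k ∈ range t.card, ρ (k + 1) < t.prod := by
  induction hn : t.card generalizing t with
  | zero => exact absurd (Multiset.card_eq_zero.1 hn) ht
  | succ n ih =>
  obtain ⟨x, hx, hlt⟩ : ∃ x ∈ t, ρ (n + 1) < x := by
    by_contra! hle
    exact (hcount (n + 1) n.succ_pos).ne ((Multiset.countP_eq_card.2 hle).trans hn)
  obtain ⟨u, rfl⟩ := Multiset.exists_cons_of_mem hx
  have prod_le : ∏ k ∈ range n, ρ (k + 1) ≤ u.prod := by
    have card_u : u.card = n := by simpa using hn
    rcases eq_or_ne u 0 with rfl | hu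
    · simp [← card_u]
    · exact (ih hu (fun m hm ↦ (Multiset.countP_le_of_le _ (Multiset.le_cons_self u x)).trans_lt
        (hcount m hm)) card_u).le
  have prod_pos : 0 < ∏ k ∈ range n, ρ (k + 1) := Finset.prod_pos fun k _ ↦ hρ _ k.succ_pos
  rw [prod_range_succ, Multiset.prod_cons, mul_comm x]
  exact mul_lt_mul_of_le_of_lt_of_pos_of_nonneg prod_le hlt prod_pos
    ((hρ _ n.succ_pos).trans hlt).le

section SparsePoints

variable {X : Type*} [PseudoMetricSpace X] {s : Multiset X} {ρ : ℕ → ℝ}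

/-- The point `z` is sparse for the points `s`, counted with multiplicity, at the scales
`ρ 1, ρ 2, …`: for every `m > 0`, fewer than `m` of them lie in the closed ball of radius `ρ m`
about `z`. -/
def SparseAt (s : Multiset X) (ρ : ℕ → ℝ) (z : X) : Prop :=
  ∀ m, 0 < m → s.countP (dist z · ≤ ρ m) < m

theorem exists_countP_eq_and_forall_countP_lt (hs : s ≠ 0) (hρ : Monotone ρ) (hρ₁ : 0 ≤ ρ 1) :
    ∃ (w : X) (k : ℕ), 0 < k ∧ s.countP (dist w · ≤ ρ k) = k ∧
      ∀ z m, k < m → s.countP (dist z · ≤ ρ m) < m := by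
  let crowded : Set ℕ := {m | ∃ z, m ≤ s.countP (dist z · ≤ ρ m)}
  have one_mem : 1 ∈ crowded := by
    obtain ⟨a, ha⟩ := Multiset.exists_mem_of_ne_zero hs
    exact ⟨a, Multiset.countP_pos.2 ⟨a, ha, by simpa using hρ₁⟩⟩
  have bdd : BddAbove crowded :=
    ⟨s.card, fun _ ⟨_, hz⟩ ↦ hz.trans (Multiset.countP_le_card _ _)⟩
  obtain ⟨k, ⟨w, hw⟩, k_max⟩ := bdd.exists_isGreatest_of_nonempty ⟨1, one_mem⟩
  refine ⟨w, k, k_max one_mem, le_antisymm (k_max ⟨w, ?_⟩) hw, fun z m hkm ↦ ?_⟩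
  · exact countP_le_countP_of_imp s fun _ ha ↦ ha.trans (hρ hw)
  · by_contra! hm
    exact hkm.not_ge (k_max ⟨z, hm⟩)

theorem SparseAt.of_filter_not {w z : X} {k : ℕ} (hρ : Monotone ρ)
    (hk : ∀ m, k < m → s.countP (dist z · ≤ ρ m) < m) (hzw : 2 * ρ k < dist z w)
    (hz : SparseAt (s.filter fun a ↦ ¬ dist w a ≤ ρ k) ρ z) : SparseAt s ρ z := by
  intro m hm
  rcases lt_or_ge k m with hkm | hmk
  · exact hk m hkm
  have far_of_near (a : X) (ha : dist z a ≤ ρ m) : ¬ dist w a ≤ ρ k := by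
    intro haw
    linarith [dist_triangle_right z w a, hρ hmk]
  calc s.countP (dist z · ≤ ρ m)
      ≤ s.countP fun a ↦ dist z a ≤ ρ m ∧ ¬ dist w a ≤ ρ k :=
        countP_le_countP_of_imp s fun a ha ↦ ⟨ha, far_of_near a ha⟩
    _ = (s.filter fun a ↦ ¬ dist w a ≤ ρ k).countP (dist z · ≤ ρ m) :=
        (Multiset.countP_filter _ _ s).symm
    _ < m := hz m hm

theorem exists_cover_not_sparseAt (hρ : Monotone ρ) (hρ₁ : 0 ≤ ρ 1) (s : Multiset X) :
    ∃ (p : ℕ) (w : Fin p → X) (k : Fin p → ℕ), (∀ j, 0 < k j) ∧ ∑ j, k j = s.card ∧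
      {z | ¬ SparseAt s ρ z} ⊆ ⋃ j, closedBall (w j) (2 * ρ (k j)) := by
  induction s using Multiset.strongInductionOn with
  | _ s ih =>
  rcases eq_or_ne s 0 with rfl | hs
  · exact ⟨0, Fin.elim0, Fin.elim0, by simp, by simp, by simp [SparseAt]⟩
  obtain ⟨w₀, k₀, hk₀, count_eq, k₀_max⟩ := exists_countP_eq_and_forall_countP_lt hs hρ hρ₁
  set t := s.filter fun a ↦ ¬ dist w₀ a ≤ ρ k₀
  have card_add : k₀ + t.card = s.card := by
    rw [← Multiset.countP_eq_card_filter, Multiset.card_eq_countP_add_countP (dist w₀ · ≤ ρ k₀) s,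
      count_eq]
  have ht : t < s := (Multiset.filter_le _ s).lt_of_ne fun hts : t = s ↦ by
    rw [hts] at card_add
    omega
  obtain ⟨p, w, k, hk, sum_k, cover⟩ := ih t ht
  refine ⟨p + 1, Fin.cons w₀ w, Fin.cons k₀ k, ?_, ?_, fun z hz ↦ ?_⟩
  · simpa [Fin.forall_fin_succ] using ⟨hk₀, hk⟩
  · simpa [Fin.sum_univ_succ, sum_k] using card_add
  by_cases hzw : dist z w₀ ≤ 2 * ρ k₀
  · exact Set.mem_iUnion.2 ⟨0, by simpa using hzw⟩
  · have hzt : ¬ SparseAt t ρ z := fun h ↦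
      hz (h.of_filter_not hρ (k₀_max z) (not_le.1 hzw))
    obtain ⟨j, hj⟩ := Set.mem_iUnion.1 (cover hzt)
    exact Set.mem_iUnion.2 ⟨j.succ, by simpa using hj⟩

theorem SparseAt.prod_range_lt_prod_dist {z : X} (hρ : ∀ m, 0 < m → 0 < ρ m) (hs : s ≠ 0)
    (hz : SparseAt s ρ z) : ∏ k ∈ range s.card, ρ (k + 1) < (s.map (dist z)).prod := by
  have count (m : ℕ) (hm : 0 < m) : (s.map (dist z)).countP (· ≤ ρ m) < m := by
    rw [Multiset.countP_map, ← Multiset.countP_eq_card_filter]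
    exact hz m hm
  simpa using prod_range_lt_multiset_prod hρ (by simpa using hs) count

end SparsePoints

section CartanRadius

/-- Cartan's radii `ρ k`, for `n` points and level `ε ^ n`: the multiples of `ε` for which
`ρ k ^ α` is linear in `k` and `ρ n ^ α = e * ε ^ α`. -/
noncomputable def cartanRadius (α ε : ℝ) (n k : ℕ) : ℝ :=
  ε * (Real.exp 1 * k / n) ^ α⁻¹

variable {α ε : ℝ}

theorem monotone_cartanRadius (hα : 0 ≤ α) (hε : 0 ≤ ε) (n : ℕ) :
    Monotone (cartanRadius α ε n) := fun k l hkl ↦ by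
  unfold cartanRadius
  gcongr

theorem cartanRadius_pos (hε : 0 < ε) {n k : ℕ} (hn : 0 < n) (hk : 0 < k) :
    0 < cartanRadius α ε n k := by
  unfold cartanRadius
  positivity

theorem two_mul_cartanRadius_rpow (hα : α ≠ 0) (hε : 0 ≤ ε) (n k : ℕ) :
    (2 * cartanRadius α ε n k) ^ α = (2 * ε) ^ α * (Real.exp 1 * k / n) := by
  rw [cartanRadius, ← mul_assoc, Real.mul_rpow (by positivity) (by positivity),
    Real.rpow_inv_rpow (by positivity) hα]

theorem one_le_prod_exp_one_mul_div (n : ℕ) :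
    1 ≤ ∏ k ∈ range n, Real.exp 1 * (k + 1 : ℕ) / n := by
  rcases n.eq_zero_or_pos with rfl | hn
  · simp
  calc 1 ≤ Real.exp n * n.factorial / (n : ℝ) ^ n := by
        rw [one_le_div₀ (by positivity), ← div_le_iff₀ (by positivity)]
        exact Real.pow_div_factorial_le_exp n n.cast_nonneg n
    _ = ∏ k ∈ range n, Real.exp 1 * (k + 1 : ℕ) / n := by
        rw [prod_div_distrib, prod_mul_distrib, prod_const, prod_const, card_range,
          ← Nat.cast_prod, prod_range_add_one_eq_factorial, Real.exp_one_pow]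

theorem pow_le_prod_cartanRadius (hα : 0 ≤ α) (hε : 0 ≤ ε) (n : ℕ) :
    ε ^ n ≤ ∏ k ∈ range n, cartanRadius α ε n (k + 1) := by
  simp only [cartanRadius]
  rw [prod_mul_distrib, prod_const, card_range, Real.finsetProd_rpow _ _ fun k _ ↦ by positivity]
  exact le_mul_of_one_le_right (by positivity)
    (Real.one_le_rpow (one_le_prod_exp_one_mul_div n) (inv_nonneg.2 hα))

end CartanRadius

theorem exists_cover_prod_dist_le_pow {X : Type*} [PseudoMetricSpace X] {α ε : ℝ} (hα : 0 < α)
    (hε : 0 < ε) {s : Multiset X} (hs : s ≠ 0) :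
    ∃ (p : ℕ) (w : Fin p → X) (r : Fin p → ℝ), p ≤ s.card ∧ (∀ j, 0 < r j) ∧
      {z | (s.map (dist z)).prod ≤ ε ^ s.card} ⊆ ⋃ j, closedBall (w j) (r j) ∧
      ∑ j, r j ^ α = Real.exp 1 * (2 * ε) ^ α := by
  have hn : 0 < s.card := Multiset.card_pos.2 hs
  set ρ := cartanRadius α ε s.card
  have ρ_pos (k : ℕ) (hk : 0 < k) : 0 < ρ k := cartanRadius_pos hε hn hk
  obtain ⟨p, w, k, hk, sum_k, cover⟩ :=
    exists_cover_not_sparseAt (monotone_cartanRadius hα.le hε.le s.card) (ρ_pos 1 one_pos).le s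
  refine ⟨p, w, fun j ↦ 2 * ρ (k j), ?_, fun j ↦ mul_pos two_pos (ρ_pos _ (hk j)), ?_, ?_⟩
  · simpa [sum_k] using card_nsmul_le_sum univ k 1 fun j _ ↦ hk j
  · refine fun z hz ↦ cover fun hsparse : SparseAt s ρ z ↦ ?_
    exact ((pow_le_prod_cartanRadius hα.le hε.le s.card).trans_lt
      (hsparse.prod_range_lt_prod_dist ρ_pos hs)).not_ge hz
  · calc ∑ j, (2 * ρ (k j)) ^ α = ∑ j, (2 * ε) ^ α * (Real.exp 1 * k j / s.card) :=
          sum_congr rfl fun j _ ↦ two_mul_cartanRadius_rpow hα.ne' hε.le _ _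
      _ = (2 * ε) ^ α * (Real.exp 1 * s.card / s.card) := by
          rw [← mul_sum, ← sum_div, ← mul_sum, ← Nat.cast_sum, sum_k]
      _ = Real.exp 1 * (2 * ε) ^ α := by
          field_simp

theorem norm_eval_eq_prod_dist_roots {K : Type*} [NormedField K] {P : Polynomial K}
    (hP : P.Splits) (hmonic : P.Monic) (z : K) :
    ‖P.eval z‖ = (P.roots.map (dist z)).prod := by
  rw [hP.eval_eq_prod_roots_of_monic hmonic, ← normHom_apply, map_multiset_prod, Multiset.map_map]
  simp [dist_eq_norm]

theorem statement11_general {K : Type*} [NormedField K] {α ε : ℝ} (hα : 0 < α) (hε : 0 < ε)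
    {P : Polynomial K} (hP : P.Splits) (hmonic : P.Monic) (hdeg : 1 ≤ P.natDegree) :
    ∃ (p : ℕ) (w : Fin p → K) (r : Fin p → ℝ), p ≤ P.natDegree ∧ (∀ j, 0 < r j) ∧
      {z : K | ‖P.eval z‖ ≤ ε ^ P.natDegree} ⊆ ⋃ j, closedBall (w j) (r j) ∧
      ∑ j, r j ^ α = Real.exp 1 * (2 * ε) ^ α := by
  have card_roots : P.natDegree = P.roots.card := hP.natDegree_eq_card_roots
  have roots_ne_zero : P.roots ≠ 0 := Multiset.card_pos.1 (card_roots ▸ hdeg)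
  simpa only [norm_eval_eq_prod_dist_roots hP hmonic, card_roots] using
    exists_cover_prod_dist_le_pow hα hε roots_ne_zero

/-- Cartan's lemma: for a monic polynomial `P` of degree `d`, the sublevel set
`V_{ε^d}(P) = {z : |P(z)| ≤ ε^d}` can be covered by `p ≤ d` disks whose radii `r_j > 0`
satisfy `∑ r_j^α ≤ e (2ε)^α`. -/
theorem statement11 (α ε : ℝ) (hα : 0 < α) (hε : 0 < ε)
    (P : Polynomial ℂ) (d : ℕ) (hd : 1 ≤ d) (hdeg : P.natDegree = d)
    (hmonic : P.Monic) :
    ∃ (p : ℕ) (w : Fin p → ℂ) (r : Fin p → ℝ), p ≤ d ∧ (∀ j, 0 < r j) ∧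
      ({z : ℂ | ‖P.eval z‖ ≤ ε ^ d} ⊆
        ⋃ j, Metric.closedBall (w j) (r j)) ∧
      (∑ j, r j ^ α) ≤ Real.exp 1 * (2 * ε) ^ α := by
  subst hdeg
  obtain ⟨p, w, r, hp, hr, cover, sum_eq⟩ :=
    statement11_general hα hε (IsAlgClosed.splits P) hmonic hd
  exact ⟨p, w, r, hp, hr, cover, sum_eq.le⟩
end

section
/- Let Z ⊂ D_1 and d ≥ 1. Then ω_{cd}(Z)/2 ≤ c_{d,2}(Z) ≤ c_{d,1}(Z) ≤ ρ_d(Z), where ω_{cd}(Z) = sup_{ε>0} ε·(M(ε,Z) − d)^{1/2} (the supremum taken over ε for which M(ε,Z) > d), M(ε,Z) is the minimal number of disks of radius ε needed to cover Z, and ρ_d(Z) = d·ε_0 with ε_0 the minimal ε such that Z can be covered by d disks of radius ε. -/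
/-- The `(d,α)`-Cartan measure of a set `Z ⊆ ℂ`: the infimum of `(∑ r_j^α)^{1/α}` over
all coverings of `Z` by at most `d` disks with positive radii `r_j`. -/
noncomputable def cartanMeasure (d : ℕ) (α : ℝ) (Z : Set ℂ) : ℝ :=
  sInf {t : ℝ | ∃ (p : ℕ) (w : Fin p → ℂ) (r : Fin p → ℝ), p ≤ d ∧ (∀ j, 0 < r j) ∧
    Z ⊆ (⋃ j, Metric.closedBall (w j) (r j)) ∧ t = (∑ j, r j ^ α) ^ (1 / α)}

/-- The covering number `M(ε, Z)`: the minimal number of closed disks of radius `ε`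
needed to cover `Z`. -/
noncomputable def coverNum (ε : ℝ) (Z : Set ℂ) : ℕ :=
  sInf {n : ℕ | ∃ w : Fin n → ℂ, Z ⊆ ⋃ j, Metric.closedBall (w j) ε}

/-!
For `ε < r`, the square of side `2r` circumscribed about a disk of radius `r` is covered by an
`n × n` grid of squares inscribed in disks of radius `ε`. The least possible `n` is `⌈√2 r / ε⌉`,
and then `n² ≤ 1 + 4 (r / ε)²`; for `r ≤ ε` a single disk suffices. Summing over a cover of `Z` by
`d` disks of radii `r j` gives `M(ε, Z) ≤ d + 4 ∑ (r j)² / ε²`, which is the lower bound for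
`c_{d,2}`. The two upper bounds are the monotonicity of `ℓ^α` norms and the choice of equal radii.
-/

open Metric Set

section Covering

variable {ε : ℝ} {Z : Set ℂ}

theorem coverNum_le_card {ι : Type*} [Fintype ι] {w : ι → ℂ} (hw : Z ⊆ ⋃ j, closedBall (w j) ε) :
    coverNum ε Z ≤ Fintype.card ι := by
  refine Nat.sInf_le ⟨w ∘ (Fintype.equivFin ι).symm, hw.trans_eq ?_⟩
  exact ((Fintype.equivFin ι).symm.iSup_comp (g := fun j => closedBall (w j) ε)).symm

theorem exists_subset_iUnion_closedBall_coverNum (hZ : Bornology.IsBounded Z) (hε : 0 < ε) :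
    ∃ w : Fin (coverNum ε Z) → ℂ, Z ⊆ ⋃ j, closedBall (w j) ε := by
  obtain ⟨t, -, ht, hcover⟩ := finite_approx_of_totallyBounded
    (hZ.isCompact_closure.totallyBounded.subset subset_closure) ε hε
  have := ht.fintype
  refine Nat.sInf_mem (s := {n | ∃ w : Fin n → ℂ, Z ⊆ ⋃ j, closedBall (w j) ε})
    ⟨Fintype.card t, fun j => (Fintype.equivFin t).symm j, fun z hz => ?_⟩
  obtain ⟨y, hy, hzy⟩ := mem_iUnion₂.1 (hcover hz)
  exact mem_iUnion.2 ⟨Fintype.equivFin t ⟨y, hy⟩, by simpa using ball_subset_closedBall hzy⟩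

theorem coverNum_le_sum_coverNum {ι : Type*} [Fintype ι] {S : ι → Set ℂ} (hε : 0 < ε)
    (hS : ∀ j, Bornology.IsBounded (S j)) (hZ : Z ⊆ ⋃ j, S j) :
    coverNum ε Z ≤ ∑ j, coverNum ε (S j) := by
  choose w hw using fun j => exists_subset_iUnion_closedBall_coverNum (hS j) hε
  have hcover : Z ⊆ ⋃ x : Σ j, Fin (coverNum ε (S j)), closedBall (w x.1 x.2) ε := by
    rw [iUnion_sigma]
    exact hZ.trans (iUnion_mono hw)
  simpa using coverNum_le_card hcover

theorem exists_fin_abs_sub_midpoint_le {n : ℕ} {a h x : ℝ} (hn : 0 < n) (hh : 0 < h)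
    (hx : x ∈ Icc a (a + n * h)) : ∃ i : Fin n, |x - (a + (i + 1 / 2) * h)| ≤ h / 2 := by
  suffices ∃ i : Fin n, a + i * h ≤ x ∧ x ≤ a + (i + 1) * h by
    obtain ⟨i, hleft, hright⟩ := this
    exact ⟨i, abs_le.2 ⟨by linarith, by linarith⟩⟩
  rcases hx.2.eq_or_lt with rfl | hlt
  · refine ⟨⟨n - 1, by lia⟩, ?_⟩
    simp only [Nat.cast_pred hn]
    constructor <;> linarith
  · have hquot : 0 ≤ (x - a) / h := div_nonneg (sub_nonneg.2 hx.1) hh.le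
    refine ⟨⟨⌊(x - a) / h⌋₊, (Nat.floor_lt hquot).2 ((div_lt_iff₀ hh).2 (by linarith))⟩, ?_, ?_⟩
    · linarith [(le_div_iff₀ hh).1 (Nat.floor_le hquot)]
    · linarith [(div_lt_iff₀ hh).1 (Nat.lt_floor_add_one ((x - a) / h))]

theorem coverNum_closedBall_le_sq {n : ℕ} {r : ℝ} (w : ℂ) (hε : 0 < ε) (hn : 0 < n)
    (hr : √2 * r ≤ n * ε) : coverNum ε (closedBall w r) ≤ n ^ 2 := by
  have hsqrt : √2 * √2 = 2 := Real.mul_self_sqrt zero_le_two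
  have hside : 0 < √2 * ε := by positivity
  have hwidth : 2 * r ≤ n * (√2 * ε) := by
    linear_combination √2 * hr - r * hsqrt
  let c : Fin n × Fin n → ℂ := fun i =>
    ⟨w.re - r + (i.1 + 1 / 2) * (√2 * ε), w.im - r + (i.2 + 1 / 2) * (√2 * ε)⟩
  suffices hc : closedBall w r ⊆ ⋃ i, closedBall (c i) ε by
    simpa [sq] using coverNum_le_card hc
  intro z hz
  rw [mem_closedBall, Complex.dist_eq] at hz
  have hre := abs_le.1 ((Complex.abs_re_le_norm _).trans hz)
  have him := abs_le.1 ((Complex.abs_im_le_norm _).trans hz)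
  rw [Complex.sub_re] at hre
  rw [Complex.sub_im] at him
  obtain ⟨i, hi⟩ := exists_fin_abs_sub_midpoint_le (a := w.re - r) (x := z.re) hn hside
    ⟨by linarith, by linarith⟩
  obtain ⟨j, hj⟩ := exists_fin_abs_sub_midpoint_le (a := w.im - r) (x := z.im) hn hside
    ⟨by linarith, by linarith⟩
  refine mem_iUnion.2 ⟨(i, j), ?_⟩
  rw [mem_closedBall, Complex.dist_eq]
  calc ‖z - c (i, j)‖ ≤ √2 * max |(z - c (i, j)).re| |(z - c (i, j)).im| :=
        Complex.norm_le_sqrt_two_mul_max _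
    _ ≤ √2 * (√2 * ε / 2) := by gcongr; exact max_le hi hj
    _ = ε := by linear_combination ε / 2 * hsqrt

theorem natCeil_sq_le_one_add_two_mul_sq {x : ℝ} (hx : √2 ≤ x) :
    (⌈x⌉₊ : ℝ) ^ 2 ≤ 1 + 2 * x ^ 2 := by
  have hx_pos : 0 < x := (by positivity : 0 < √2).trans_le hx
  have hx_sq : 2 ≤ x ^ 2 := (Real.sqrt_le_left hx_pos.le).1 hx
  have hceil : (⌈x⌉₊ : ℝ) < x + 1 := Nat.ceil_lt_add_one hx_pos.le
  rcases Nat.lt_or_ge ⌈x⌉₊ 3 with hlt | hge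
  · have : (⌈x⌉₊ : ℝ) ≤ 2 := mod_cast Nat.le_of_lt_succ hlt
    nlinarith
  · have hge : (3 : ℝ) ≤ ⌈x⌉₊ := mod_cast hge
    have hpred : ((⌈x⌉₊ : ℝ) - 1) ^ 2 ≤ x ^ 2 := by gcongr <;> linarith
    nlinarith

theorem coverNum_closedBall_le (w : ℂ) (r : ℝ) (hε : 0 < ε) :
    (coverNum ε (closedBall w r) : ℝ) ≤ 1 + 4 * (r / ε) ^ 2 := by
  rcases le_or_gt r ε with hle | hlt
  · have hone : coverNum ε (closedBall w r) ≤ 1 := by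
      simpa using coverNum_le_card (ι := Unit) (w := fun _ => w)
        ((closedBall_subset_closedBall hle).trans (subset_iUnion_of_subset () subset_rfl))
    calc (coverNum ε (closedBall w r) : ℝ) ≤ 1 := mod_cast hone
      _ ≤ 1 + 4 * (r / ε) ^ 2 := le_add_of_nonneg_right (by positivity)
  · have hratio : √2 ≤ √2 * (r / ε) :=
      le_mul_of_one_le_right (Real.sqrt_nonneg 2) ((one_le_div hε).2 hlt.le)
    have hn : 0 < ⌈√2 * (r / ε)⌉₊ := Nat.ceil_pos.2 ((by positivity : 0 < √2).trans_le hratio)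
    have hr : √2 * r ≤ ⌈√2 * (r / ε)⌉₊ * ε := by
      rw [← div_le_iff₀ hε, mul_div_assoc]
      exact Nat.le_ceil _
    calc (coverNum ε (closedBall w r) : ℝ) ≤ (⌈√2 * (r / ε)⌉₊ : ℝ) ^ 2 :=
          mod_cast coverNum_closedBall_le_sq w hε hn hr
      _ ≤ 1 + 2 * (√2 * (r / ε)) ^ 2 := natCeil_sq_le_one_add_two_mul_sq hratio
      _ = 1 + 4 * (r / ε) ^ 2 := by rw [mul_pow, Real.sq_sqrt zero_le_two]; ring

theorem coverNum_le_card_add_sum_sq {ι : Type*} [Fintype ι] {w : ι → ℂ} {r : ι → ℝ} (hε : 0 < ε)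
    (hZ : Z ⊆ ⋃ j, closedBall (w j) (r j)) :
    (coverNum ε Z : ℝ) ≤ Fintype.card ι + 4 * (∑ j, r j ^ 2) / ε ^ 2 := by
  calc (coverNum ε Z : ℝ) ≤ ∑ j, (coverNum ε (closedBall (w j) (r j)) : ℝ) :=
        mod_cast coverNum_le_sum_coverNum hε (fun _ => isBounded_closedBall) hZ
    _ ≤ ∑ j, (1 + 4 * (r j / ε) ^ 2) := by gcongr; exact coverNum_closedBall_le _ _ hε
    _ = Fintype.card ι + 4 * (∑ j, r j ^ 2) / ε ^ 2 := by
        simp [Finset.sum_add_distrib, Finset.mul_sum, Finset.sum_div, div_pow, mul_div_assoc]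

end Covering

section PowerSums

variable {ι : Type*} (s : Finset ι) {f : ι → ℝ} {α β : ℝ}

theorem rpow_sum_rpow_nonneg (hf : ∀ i ∈ s, 0 ≤ f i) : 0 ≤ (∑ i ∈ s, f i ^ α) ^ (1 / α) :=
  Real.rpow_nonneg (Finset.sum_nonneg fun i hi => Real.rpow_nonneg (hf i hi) α) _

theorem rpow_sum_rpow_le_of_exponent_le (hα : 0 < α) (hαβ : α ≤ β) (hf : ∀ i ∈ s, 0 ≤ f i) :
    (∑ i ∈ s, f i ^ β) ^ (1 / β) ≤ (∑ i ∈ s, f i ^ α) ^ (1 / α) := by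
  have hβ : 0 < β := hα.trans_le hαβ
  have hpow : ∀ i ∈ s, 0 ≤ f i ^ α := fun i hi => Real.rpow_nonneg (hf i hi) α
  set N := (∑ i ∈ s, f i ^ α) ^ (1 / α) with hN
  have hN_nonneg : 0 ≤ N := rpow_sum_rpow_nonneg s hf
  have hN_pow : N ^ α = ∑ i ∈ s, f i ^ α := by
    rw [hN, one_div, Real.rpow_inv_rpow (Finset.sum_nonneg hpow) hα.ne']
  have hf_le : ∀ i ∈ s, f i ≤ N := fun i hi =>
    (Real.rpow_le_rpow_iff (hf i hi) hN_nonneg hα).1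
      (hN_pow ▸ Finset.single_le_sum hpow hi)
  have hsplit : ∀ {x : ℝ}, 0 ≤ x → x ^ β = x ^ α * x ^ (β - α) := fun hx => by
    rw [← Real.rpow_add_of_nonneg hx hα.le (sub_nonneg.2 hαβ), add_sub_cancel]
  rw [one_div, Real.rpow_inv_le_iff_of_pos
    (Finset.sum_nonneg fun i hi => Real.rpow_nonneg (hf i hi) β) hN_nonneg hβ]
  calc ∑ i ∈ s, f i ^ β = ∑ i ∈ s, f i ^ α * f i ^ (β - α) :=
        Finset.sum_congr rfl fun i hi => hsplit (hf i hi)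
    _ ≤ ∑ i ∈ s, f i ^ α * N ^ (β - α) := Finset.sum_le_sum fun i hi =>
        mul_le_mul_of_nonneg_left
          (Real.rpow_le_rpow (hf i hi) (hf_le i hi) (sub_nonneg.2 hαβ)) (hpow i hi)
    _ = N ^ β := by rw [← Finset.sum_mul, ← hN_pow, ← hsplit hN_nonneg]

end PowerSums

section CartanMeasure

variable {d : ℕ} {α : ℝ} {Z : Set ℂ}

variable (d α Z) in
theorem cartanMeasure_nonneg : 0 ≤ cartanMeasure d α Z := by
  refine Real.sInf_nonneg ?_
  rintro _ ⟨p, w, r, -, hr, -, rfl⟩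
  exact rpow_sum_rpow_nonneg _ fun j _ => (hr j).le

theorem cartanMeasure_le {p : ℕ} {w : Fin p → ℂ} {r : Fin p → ℝ} (hp : p ≤ d) (hr : ∀ j, 0 < r j)
    (hZ : Z ⊆ ⋃ j, closedBall (w j) (r j)) :
    cartanMeasure d α Z ≤ (∑ j, r j ^ α) ^ (1 / α) := by
  refine csInf_le ⟨0, ?_⟩ ⟨p, w, r, hp, hr, hZ, rfl⟩
  rintro _ ⟨p, w, r, -, hr, -, rfl⟩
  exact rpow_sum_rpow_nonneg _ fun j _ => (hr j).le

theorem exists_pos_subset_iUnion_closedBall (hd : 1 ≤ d) (hZ : Bornology.IsBounded Z) :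
    ∃ ε > 0, ∃ w : Fin d → ℂ, Z ⊆ ⋃ j, closedBall (w j) ε := by
  obtain ⟨ε, hε, hsub⟩ := hZ.subset_closedBall_lt 0 0
  exact ⟨ε, hε, fun _ => 0, hsub.trans (subset_iUnion_of_subset ⟨0, hd⟩ subset_rfl)⟩

theorem le_cartanMeasure {b : ℝ} (hd : 1 ≤ d) (hZ : Bornology.IsBounded Z)
    (hb : ∀ (p : ℕ) (w : Fin p → ℂ) (r : Fin p → ℝ), p ≤ d → (∀ j, 0 < r j) →
      Z ⊆ (⋃ j, closedBall (w j) (r j)) → b ≤ (∑ j, r j ^ α) ^ (1 / α)) :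
    b ≤ cartanMeasure d α Z := by
  obtain ⟨ε, hε, w, hw⟩ := exists_pos_subset_iUnion_closedBall hd hZ
  refine le_csInf ⟨_, d, w, fun _ => ε, le_rfl, fun _ => hε, hw, rfl⟩ ?_
  rintro _ ⟨p, w, r, hp, hr, hcover, rfl⟩
  exact hb p w r hp hr hcover

theorem mul_sqrt_coverNum_sub_le_two_mul_cartanMeasure {ε : ℝ} (hd : 1 ≤ d)
    (hZ : Bornology.IsBounded Z) (hε : 0 < ε) :
    ε * √((coverNum ε Z - d : ℕ) : ℝ) ≤ 2 * cartanMeasure d 2 Z := by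
  rw [← div_le_iff₀' two_pos]
  refine le_cartanMeasure hd hZ fun p w r hp _ hcover => ?_
  have hcount : ((coverNum ε Z - d : ℕ) : ℝ) ≤ 4 * (∑ j, r j ^ 2) / ε ^ 2 := by
    rcases le_total (coverNum ε Z) d with hle | hge
    · rw [Nat.sub_eq_zero_of_le hle, Nat.cast_zero]
      positivity
    · have hM := coverNum_le_card_add_sum_sq hε hcover
      have hp : (p : ℝ) ≤ d := mod_cast hp
      rw [Fintype.card_fin] at hM
      rw [Nat.cast_sub hge]
      linarith
  simp only [Real.rpow_two, ← Real.sqrt_eq_rpow]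
  rw [div_le_iff₀' two_pos]
  calc ε * √((coverNum ε Z - d : ℕ) : ℝ) ≤ ε * √(4 * (∑ j, r j ^ 2) / ε ^ 2) := by gcongr
    _ = √(2 ^ 2 * ∑ j, r j ^ 2) := by
        rw [Real.sqrt_div' _ (sq_nonneg ε), Real.sqrt_sq hε.le, mul_div_cancel₀ _ hε.ne']
        norm_num
    _ = 2 * √(∑ j, r j ^ 2) := by
        rw [Real.sqrt_mul (sq_nonneg 2), Real.sqrt_sq zero_le_two]

theorem cartanMeasure_le_of_exponent_le {β : ℝ} (hd : 1 ≤ d) (hZ : Bornology.IsBounded Z)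
    (hα : 0 < α) (hαβ : α ≤ β) : cartanMeasure d β Z ≤ cartanMeasure d α Z :=
  le_cartanMeasure hd hZ fun _ _ _ hp hr hcover => (cartanMeasure_le hp hr hcover).trans
    (rpow_sum_rpow_le_of_exponent_le _ hα hαβ fun j _ => (hr j).le)

theorem cartanMeasure_le_rpow_mul {w : Fin d → ℂ} {ε : ℝ} (hα : α ≠ 0) (hε : 0 < ε)
    (hZ : Z ⊆ ⋃ j, closedBall (w j) ε) : cartanMeasure d α Z ≤ (d : ℝ) ^ (1 / α) * ε := by
  calc cartanMeasure d α Z ≤ (∑ _ : Fin d, ε ^ α) ^ (1 / α) :=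
        cartanMeasure_le le_rfl (fun _ => hε) hZ
    _ = (d : ℝ) ^ (1 / α) * ε := by
        rw [Finset.sum_const, Finset.card_univ, Fintype.card_fin, nsmul_eq_mul,
          Real.mul_rpow d.cast_nonneg (Real.rpow_nonneg hε.le α), one_div,
          Real.rpow_rpow_inv hε.le hα]

end CartanMeasure

theorem statement18_general (d : ℕ) (hd : 1 ≤ d) (Z : Set ℂ) (hZ : Bornology.IsBounded Z) :
    sSup {t : ℝ | ∃ ε : ℝ, 0 < ε ∧ d < coverNum ε Z ∧
        t = ε * Real.sqrt ((coverNum ε Z - d : ℕ) : ℝ)} / 2 ≤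
      cartanMeasure d 2 Z ∧
    cartanMeasure d 2 Z ≤ cartanMeasure d 1 Z ∧
    cartanMeasure d 1 Z ≤
      d * sInf {ε : ℝ | 0 < ε ∧ ∃ w : Fin d → ℂ,
        Z ⊆ ⋃ j, Metric.closedBall (w j) ε} := by
  refine ⟨?_, cartanMeasure_le_of_exponent_le hd hZ one_pos one_le_two, ?_⟩
  · rw [div_le_iff₀' two_pos]
    refine Real.sSup_le ?_ (mul_nonneg zero_le_two (cartanMeasure_nonneg d 2 Z))
    rintro _ ⟨ε, hε, -, rfl⟩
    exact mul_sqrt_coverNum_sub_le_two_mul_cartanMeasure hd hZ hε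
  · have hd_pos : (0 : ℝ) < d := mod_cast hd
    rw [← div_le_iff₀' hd_pos]
    refine le_csInf (exists_pos_subset_iUnion_closedBall hd hZ) ?_
    rintro ε ⟨hε, w, hw⟩
    rw [div_le_iff₀' hd_pos]
    simpa using cartanMeasure_le_rpow_mul one_ne_zero hε hw

/-- `ω_{cd}(Z)/2 ≤ c_{d,2}(Z) ≤ c_{d,1}(Z) ≤ ρ_d(Z)`, where
`ω_{cd}(Z) = sup_{ε : M(ε,Z) > d} ε (M(ε,Z) - d)^{1/2}` and `ρ_d(Z) = d ε₀`, with `ε₀`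
the minimal `ε` such that `Z` can be covered by `d` disks of radius `ε`. -/
theorem statement18 (d : ℕ) (hd : 1 ≤ d) (Z : Set ℂ)
    (hZ : Z ⊆ Metric.closedBall (0 : ℂ) 1) :
    sSup {t : ℝ | ∃ ε : ℝ, 0 < ε ∧ d < coverNum ε Z ∧
        t = ε * Real.sqrt ((coverNum ε Z - d : ℕ) : ℝ)} / 2 ≤
      cartanMeasure d 2 Z ∧
    cartanMeasure d 2 Z ≤ cartanMeasure d 1 Z ∧
    cartanMeasure d 1 Z ≤
      d * sInf {ε : ℝ | 0 < ε ∧ ∃ w : Fin d → ℂ,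
        Z ⊆ ⋃ j, Metric.closedBall (w j) ε} := by
  exact statement18_general d hd Z (Metric.isBounded_closedBall.subset hZ)
end
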